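/- arXiv:2402.07816 — 7 statements merged into one kernel-verified Lean document; each statement's English description precedes it below -/
import Mathlib

section
/- Let (V^α)_{α∈ℚ} be a weak V-filtration on M. Then for every α ∈ ℚ with α ≠ 0, the k-linear maps induced by T from V^α/V^{>α} to V^{α+1}/V^{>α+1}, and by D from V^{α+1}/V^{>α+1} to V^α/V^{>α} (both well defined because T(V^β) ⊆ V^{β+1} and D(V^β) ⊆ V^{β−1} for all β), are bijective. -/
open Module

section VFiltration

variable {k : Type*} [Field k] [CharZero k]
variable {M : Type*} [AddCommGroup M] [Module k M]

/-- The subalgebra `A0 ⊆ End_k(M)` generated by `T`, `S = -(D∘T)` and the set `C`. -/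
def VFilt.A0 (T D : Module.End k M) (C : Set (Module.End k M)) :
    Subalgebra k (Module.End k M) :=
  Algebra.adjoin k ({T, -(D * T)} ∪ C)

/-- `V^{>α} = ⋃_{β > α} V^β`. -/
def VFilt.gt (V : ℚ → Submodule k M) (α : ℚ) : Submodule k M := ⨆ β > α, V β

/-- A weak `V`-filtration on `M` with respect to the data `T`, `D`, `C`. -/
structure IsWeakVFiltration (T D : Module.End k M) (C : Set (Module.End k M))
    (V : ℚ → Submodule k M) : Prop where
  /-- decreasing -/
  antitone : Antitone V
  /-- exhaustive -/
  exhaustive : ∀ m : M, ∃ α : ℚ, m ∈ V α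
  /-- discrete and left-continuous -/
  discrete : ∃ ℓ : ℕ, 0 < ℓ ∧ ∀ (i : ℤ) (α β : ℚ),
    α ∈ Set.Ioc ((i : ℚ) / ℓ) ((i + 1 : ℚ) / ℓ) →
    β ∈ Set.Ioc ((i : ℚ) / ℓ) ((i + 1 : ℚ) / ℓ) → V α = V β
  /-- each `V^α` is stable under every element of `A0` -/
  stable : ∀ a ∈ VFilt.A0 T D C, ∀ α : ℚ, (V α).map a ≤ V α
  /-- `T(V^α) ⊆ V^{α+1}` -/
  mapT_le : ∀ α : ℚ, (V α).map T ≤ V (α + 1)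
  /-- `D(V^α) ⊆ V^{α-1}` -/
  mapD_le : ∀ α : ℚ, (V α).map D ≤ V (α - 1)
  /-- `(S + α·id)^N (V^α) ⊆ V^{>α}` for some `N ≥ 1` -/
  nilpotent : ∀ α : ℚ, ∃ N : ℕ, 1 ≤ N ∧ ∀ u ∈ V α,
    ((-(D * T) + (α : k) • (1 : Module.End k M)) ^ N) u ∈ VFilt.gt V α

/-- A `V`-filtration on `M`: a weak `V`-filtration such that each `V^α` is a finitely
generated `A0`-module and `T(V^α) = V^{α+1}` for `α > 0`. -/
structure IsVFiltration (T D : Module.End k M) (C : Set (Module.End k M))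
    (V : ℚ → Submodule k M) extends IsWeakVFiltration T D C V : Prop where
  /-- each `V^α` is a finitely generated `A0`-module: it is the smallest `A0`-stable
  `k`-subspace containing some finite set -/
  fg : ∀ α : ℚ, ∃ F : Finset M, (↑F : Set M) ⊆ (V α : Set M) ∧
    ∀ W : Submodule k M, (∀ a ∈ VFilt.A0 T D C, W.map a ≤ W) →
      (↑F : Set M) ⊆ (W : Set M) → V α ≤ W
  /-- `T(V^α) = V^{α+1}` for `α > 0` -/
  mapT_eq : ∀ α : ℚ, 0 < α → (V α).map T = V (α + 1)

end VFiltration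

section Graded

variable {k : Type*} [Field k] [CharZero k]
variable {M : Type*} [AddCommGroup M] [Module k M]

/-- The graded piece `Gr_V^α(M) = V^α / V^{>α}`. -/
abbrev VFilt.gr (V : ℚ → Submodule k M) (α : ℚ) :=
  V α ⧸ (VFilt.gt V α).comap (V α).subtype

/-- The `k`-linear map `Gr_V^α(M) → Gr_V^β(M)` induced by an endomorphism `g` with
`g(V^α) ⊆ V^β` and `g(V^{>α}) ⊆ V^{>β}`. -/
def VFilt.grInduced (V : ℚ → Submodule k M) (g : Module.End k M) (α β : ℚ)
    (h1 : ∀ x ∈ V α, g x ∈ V β)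
    (h2 : ∀ x ∈ VFilt.gt V α, g x ∈ VFilt.gt V β) :
    VFilt.gr V α →ₗ[k] VFilt.gr V β :=
  Submodule.mapQ _ _ (g.restrict h1) (fun x hx => h2 x.1 hx)

theorem IsWeakVFiltration.mapT_mem {T D : Module.End k M} {C : Set (Module.End k M)}
    {V : ℚ → Submodule k M} (hV : IsWeakVFiltration T D C V) {α : ℚ} {x : M}
    (hx : x ∈ V α) : T x ∈ V (α + 1) :=
  hV.mapT_le α (Submodule.mem_map_of_mem hx)

theorem IsWeakVFiltration.mapD_mem {T D : Module.End k M} {C : Set (Module.End k M)}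
    {V : ℚ → Submodule k M} (hV : IsWeakVFiltration T D C V) {α : ℚ} {x : M}
    (hx : x ∈ V (α + 1)) : D x ∈ V α := by
  have := hV.mapD_le (α + 1) (Submodule.mem_map_of_mem hx)
  simpa using this

theorem IsWeakVFiltration.gtMapT {T D : Module.End k M} {C : Set (Module.End k M)}
    {V : ℚ → Submodule k M} (hV : IsWeakVFiltration T D C V) {α : ℚ} {x : M}
    (hx : x ∈ VFilt.gt V α) : T x ∈ VFilt.gt V (α + 1) := by
  have hle : (VFilt.gt V α).map T ≤ VFilt.gt V (α + 1) := by
    unfold VFilt.gt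
    rw [Submodule.map_iSup]
    refine iSup_le fun β => ?_
    rw [Submodule.map_iSup]
    refine iSup_le fun hβ => le_trans (hV.mapT_le β) ?_
    exact le_iSup_of_le (β + 1) (le_iSup_of_le (by linarith) le_rfl)
  exact hle (Submodule.mem_map_of_mem hx)

theorem IsWeakVFiltration.gtMapD {T D : Module.End k M} {C : Set (Module.End k M)}
    {V : ℚ → Submodule k M} (hV : IsWeakVFiltration T D C V) {α : ℚ} {x : M}
    (hx : x ∈ VFilt.gt V (α + 1)) : D x ∈ VFilt.gt V α := by
  have hle : (VFilt.gt V (α + 1)).map D ≤ VFilt.gt V α := by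
    unfold VFilt.gt
    rw [Submodule.map_iSup]
    refine iSup_le fun β => ?_
    rw [Submodule.map_iSup]
    refine iSup_le fun hβ => le_trans (hV.mapD_le β) ?_
    exact le_iSup_of_le (β - 1) (le_iSup_of_le (by linarith) le_rfl)
  exact hle (Submodule.mem_map_of_mem hx)

end Graded

/-! Both composites of the maps induced by `T` and `D` are bijective: on `Gr_V^α` the operator
`D T = α - (S + α)` is a nonzero scalar minus a nilpotent, hence invertible, and since
`T D = D T - 1`, so is `T D = α - (S + (α + 1))` on `Gr_V^{α+1}`. -/

theorem isUnit_of_commute_of_isNilpotent_sub {A : Type*} [Ring A] {a u : A}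
    (hu : IsUnit u) (hcomm : Commute a u) (hnil : IsNilpotent (u - a)) : IsUnit a := by
  have h : IsUnit (u + -(u - a)) :=
    hnil.neg.isUnit_add_left_of_commute hu ((Commute.refl u).sub_left hcomm).neg_left
  simpa using h

section Subquotient

variable {R : Type*} [Ring R] {M N P : Type*} [AddCommGroup M] [Module R M]
  [AddCommGroup N] [Module R N] [AddCommGroup P] [Module R P]
  {U U' : Submodule R M} {W W' : Submodule R N} {X X' : Submodule R P}

/-- The map `U / (U ∩ U') → W / (W ∩ W')` induced by a linear map sending `U` into `W` and `U'`
into `W'`. The inclusions `U' ≤ U` and `W' ≤ W` are not built in: as in `VFilt.gr`, the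
denominators are pulled back along the subtype maps. -/
def subquotientMap (f : M →ₗ[R] N) (hf : ∀ x ∈ U, f x ∈ W) (hf' : ∀ x ∈ U', f x ∈ W') :
    (U ⧸ U'.comap U.subtype) →ₗ[R] (W ⧸ W'.comap W.subtype) :=
  Submodule.mapQ _ _ (f.restrict hf) fun x hx => hf' x hx

theorem subquotientMap_comp (g : N →ₗ[R] P) (hg : ∀ y ∈ W, g y ∈ X) (hg' : ∀ y ∈ W', g y ∈ X')
    (f : M →ₗ[R] N) (hf : ∀ x ∈ U, f x ∈ W) (hf' : ∀ x ∈ U', f x ∈ W') :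
    subquotientMap (g ∘ₗ f) (fun x hx => hg _ (hf x hx)) (fun x hx => hg' _ (hf' x hx)) =
      subquotientMap g hg hg' ∘ₗ subquotientMap f hf hf' :=
  Submodule.linearMap_qext _ rfl

end Subquotient

section Nilpotent

variable {R : Type*} [CommRing R] {M : Type*} [AddCommGroup M] [Module R M]
  {U U' : Submodule R M} {f : End R M} {c : R}

theorem isNilpotent_smul_one_sub_subquotientMap (hf : ∀ x ∈ U, f x ∈ U)
    (hf' : ∀ x ∈ U', f x ∈ U') (hnil : ∃ n : ℕ, ∀ x ∈ U, ((c • (1 : End R M) - f) ^ n) x ∈ U') :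
    IsNilpotent (c • (1 : End R (U ⧸ U'.comap U.subtype)) - subquotientMap f hf hf') := by
  obtain ⟨n, hn⟩ := hnil
  let fU : End R U := c • 1 - f.restrict hf
  have pow_coe (x : U) : ((c • (1 : End R M) - f) ^ n) x = (fU ^ n) x :=
    LinearMap.congr_fun (End.commute_pow_left_of_commute (f := U.subtype) rfl n) x
  have pow_mkQ : ((c • 1 - subquotientMap f hf hf') ^ n) ∘ₗ Submodule.mkQ _ =
      Submodule.mkQ _ ∘ₗ fU ^ n :=
    End.commute_pow_left_of_commute (by ext; rfl) n
  refine ⟨n, Submodule.linearMap_qext _ (pow_mkQ.trans (LinearMap.ext fun x => ?_))⟩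
  have pow_mem : ((fU ^ n) x : M) ∈ U' := pow_coe x ▸ hn x x.2
  exact (Submodule.Quotient.mk_eq_zero _).2 pow_mem

theorem bijective_subquotientMap_of_pow_mem (hc : IsUnit c) (hf : ∀ x ∈ U, f x ∈ U)
    (hf' : ∀ x ∈ U', f x ∈ U') (hnil : ∃ n : ℕ, ∀ x ∈ U, ((c • (1 : End R M) - f) ^ n) x ∈ U') :
    Function.Bijective (subquotientMap f hf hf') := by
  refine (End.isUnit_iff _).1 (isUnit_of_commute_of_isNilpotent_sub (u := c • 1) ?_
    ((Commute.one_right _).smul_right c) (isNilpotent_smul_one_sub_subquotientMap hf hf' hnil))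
  rw [← Algebra.algebraMap_eq_smul_one]
  exact hc.map _

end Nilpotent

theorem stmt2_general {R : Type*} [CommRing R] {M : Type*} [AddCommGroup M] [Module R M]
    {T D : End R M} (hweyl : D * T - T * D = 1) {U U' W W' : Submodule R M}
    (hT : ∀ x ∈ U, T x ∈ W) (hT' : ∀ x ∈ U', T x ∈ W')
    (hD : ∀ x ∈ W, D x ∈ U) (hD' : ∀ x ∈ W', D x ∈ U') {c : R} (hc : IsUnit c)
    (hU : ∃ n : ℕ, ∀ x ∈ U, ((-(D * T) + c • (1 : End R M)) ^ n) x ∈ U')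
    (hW : ∃ n : ℕ, ∀ x ∈ W, ((-(D * T) + (c + 1) • (1 : End R M)) ^ n) x ∈ W') :
    Function.Bijective (subquotientMap T hT hT') ∧
      Function.Bijective (subquotientMap D hD hD') := by
  have hTD : -(D * T) + (c + 1) • (1 : End R M) = c • 1 - T * D := by
    rw [add_smul, one_smul, ← hweyl]
    abel
  rw [neg_add_eq_sub] at hU
  rw [hTD] at hW
  have bijective_DT : Function.Bijective (subquotientMap D hD hD' ∘ subquotientMap T hT hT') := by
    rw [← LinearMap.coe_comp, ← subquotientMap_comp]
    exact bijective_subquotientMap_of_pow_mem hc _ _ hU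
  have bijective_TD : Function.Bijective (subquotientMap T hT hT' ∘ subquotientMap D hD hD') := by
    rw [← LinearMap.coe_comp, ← subquotientMap_comp]
    exact bijective_subquotientMap_of_pow_mem hc _ _ hW
  exact ⟨⟨bijective_DT.1.of_comp, bijective_TD.2.of_comp⟩,
    ⟨bijective_TD.1.of_comp, bijective_DT.2.of_comp⟩⟩

/-- **Proposition 3.5.** For a weak `V`-filtration and `α ≠ 0`, the maps induced by `T`
from `Gr_V^α` to `Gr_V^{α+1}` and by `D` from `Gr_V^{α+1}` to `Gr_V^α` are bijective. -/
theorem stmt2 {k : Type*} [Field k] [CharZero k]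
    {M : Type*} [AddCommGroup M] [Module k M]
    (T D : Module.End k M) (C : Set (Module.End k M))
    (hweyl : D * T - T * D = 1)
    (hC : ∀ c ∈ C, Commute c T ∧ Commute c D)
    (V : ℚ → Submodule k M) (hV : IsWeakVFiltration T D C V)
    (α : ℚ) (hα : α ≠ 0) :
    Function.Bijective (VFilt.grInduced V T α (α + 1)
      (fun _ hx => hV.mapT_mem hx) (fun _ hx => hV.gtMapT hx)) ∧
    Function.Bijective (VFilt.grInduced V D (α + 1) α
      (fun _ hx => hV.mapD_mem hx) (fun _ hx => hV.gtMapD hx)) := by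
  have nilpotent (β : ℚ) := (hV.nilpotent β).imp fun _ h => h.2
  exact stmt2_general hweyl (fun _ => hV.mapT_mem) (fun _ => hV.gtMapT) (fun _ => hV.mapD_mem)
    (fun _ => hV.gtMapD) (Rat.cast_ne_zero.2 hα).isUnit (nilpotent α)
    (by simpa only [Rat.cast_add, Rat.cast_one] using nilpotent (α + 1))
end

section
/- Let (V^α)_{α∈ℚ} be a weak V-filtration on M. If α ∈ ℚ satisfies α ≤ 0 and u ∈ M is such that T(u) ∈ V^{α+1}, then u ∈ V^α. In particular, every u ∈ M with T(u) = 0 lies in V^0. -/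
open Module

/-!
If `u ∉ V^α`, discreteness provides a jump `β < α` with `u ∈ V^β` and `u ∉ V^{>β}`. On
`V^β / V^{>β}` the operator `S + β` is nilpotent, while `S u = -D (T u) ∈ V^α ⊆ V^{>β}` makes the
class of `u` an eigenvector of `S + β` with eigenvalue `β`. Hence `β = 0`, contradicting
`β < α ≤ 0`.
-/

section EigenvectorModSubmodule

variable {R M : Type*} [AddCommGroup M]

theorem pow_apply_sub_pow_smul_mem [Ring R] [Module R M] {A : Module.End R M}
    {W : Submodule R M} (hW : W ∈ A.invtSubmodule) {c : R} {u : M} (hu : A u - c • u ∈ W) (n : ℕ) :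
    (A ^ n) u - c ^ n • u ∈ W := by
  induction n with
  | zero => simp
  | succ n ih =>
    have hsplit : (A ^ (n + 1)) u - c ^ (n + 1) • u =
        A ((A ^ n) u - c ^ n • u) + c ^ n • (A u - c • u) := by
      rw [pow_succ', Module.End.mul_apply, map_sub, map_smul, smul_sub, smul_smul, ← pow_succ,
        sub_add_sub_cancel]
    rw [hsplit]
    exact add_mem (hW ih) (W.smul_mem _ hu)

theorem mem_of_pow_apply_mem_of_apply_sub_smul_mem [DivisionRing R] [Module R M]
    {A : Module.End R M} {W : Submodule R M} (hW : W ∈ A.invtSubmodule) {c : R} (hc : c ≠ 0) {u : M}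
    (hu : A u - c • u ∈ W) {n : ℕ} (hn : (A ^ n) u ∈ W) : u ∈ W := by
  have hcu : c ^ n • u ∈ W := by
    simpa only [sub_sub_cancel] using sub_mem hn (pow_apply_sub_pow_smul_mem hW hu n)
  exact (W.smul_mem_iff (pow_ne_zero n hc)).mp hcu

end EigenvectorModSubmodule

namespace VFilt

variable {k M : Type*} [Field k] [AddCommGroup M] [Module k M]
  {V : ℚ → Submodule k M}

/-- Discreteness and left-continuity with denominator `ℓ`: the field
`IsWeakVFiltration.discrete` asserts this for some `ℓ > 0`. -/
def IsDiscreteWith {X : Type*} (V : ℚ → X) (ℓ : ℕ) : Prop :=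
  ∀ (i : ℤ) (α β : ℚ),
    α ∈ Set.Ioc ((i : ℚ) / ℓ) ((i + 1 : ℚ) / ℓ) →
    β ∈ Set.Ioc ((i : ℚ) / ℓ) ((i + 1 : ℚ) / ℓ) → V α = V β

theorem le_gt_of_lt {α β : ℚ} (h : α < β) : V β ≤ gt V α :=
  le_iSup₂_of_le β h le_rfl

theorem IsDiscreteWith.gt_le {ℓ : ℕ} (hdisc : IsDiscreteWith V ℓ) (hℓ : 0 < ℓ)
    (hanti : Antitone V) (i : ℤ) : gt V ((i : ℚ) / ℓ) ≤ V ((i + 1 : ℚ) / ℓ) := by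
  refine iSup₂_le fun β hβ => ?_
  have hlt : (i : ℚ) / ℓ < (i + 1 : ℚ) / ℓ := by gcongr; exact lt_add_one _
  rcases le_total β ((i + 1 : ℚ) / ℓ) with hle | hge
  · exact (hdisc i β _ ⟨hβ, hle⟩ ⟨hlt, le_rfl⟩).le
  · exact hanti hge

theorem IsDiscreteWith.exists_lt_mem_notMem_gt {ℓ : ℕ} (hdisc : IsDiscreteWith V ℓ)
    (hℓ : 0 < ℓ) (hanti : Antitone V) {u : M} (hexh : ∃ γ, u ∈ V γ) {α : ℚ} (hu : u ∉ V α) :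
    ∃ β < α, u ∈ V β ∧ u ∉ gt V β := by
  have hℓ' : (0 : ℚ) < ℓ := Nat.cast_pos.mpr hℓ
  have lt_of_mem {γ : ℚ} (hγ : u ∈ V γ) : γ < α := lt_of_not_ge fun h => hu (hanti h hγ)
  have hbdd (i : ℤ) (hi : u ∈ V ((i : ℚ) / ℓ)) : i ≤ ⌈α * ℓ⌉ :=
    Int.cast_le.mp (((div_lt_iff₀ hℓ').mp (lt_of_mem hi)).le.trans (Int.le_ceil _))
  have hne : ∃ i : ℤ, u ∈ V ((i : ℚ) / ℓ) := by
    obtain ⟨γ, hγ⟩ := hexh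
    exact ⟨⌊γ * ℓ⌋, hanti ((div_le_iff₀ hℓ').mpr (Int.floor_le _)) hγ⟩
  obtain ⟨i, hi, hmax⟩ := Int.exists_greatest_of_bdd ⟨_, hbdd⟩ hne
  refine ⟨i / ℓ, lt_of_mem hi, hi, fun hgt => ?_⟩
  have hsucc : u ∈ V (((i + 1 : ℤ) : ℚ) / ℓ) := by
    simpa only [Int.cast_add, Int.cast_one] using hdisc.gt_le hℓ hanti i hgt
  exact (lt_add_one i).not_ge (hmax _ hsucc)

end VFilt

namespace IsWeakVFiltration

variable {k M : Type*} [Field k] [AddCommGroup M] [Module k M]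
  {T D : Module.End k M} {C : Set (Module.End k M)} {V : ℚ → Submodule k M}

theorem exists_lt_mem_notMem_gt (hV : IsWeakVFiltration T D C V) {α : ℚ} {u : M}
    (hu : u ∉ V α) : ∃ β < α, u ∈ V β ∧ u ∉ VFilt.gt V β := by
  obtain ⟨ℓ, hℓ, hdisc⟩ := hV.discrete
  exact VFilt.IsDiscreteWith.exists_lt_mem_notMem_gt hdisc hℓ hV.antitone (hV.exhaustive u) hu

theorem gt_mem_invtSubmodule (hV : IsWeakVFiltration T D C V) {a : Module.End k M}
    (ha : a ∈ VFilt.A0 T D C) (α : ℚ) : VFilt.gt V α ∈ a.invtSubmodule := by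
  simp only [Module.End.mem_invtSubmodule_iff_map_le, VFilt.gt, Submodule.map_iSup]
  exact iSup₂_mono fun β _ => hV.stable a ha β

theorem mem_gt_of_apply_mem_gt [CharZero k] (hV : IsWeakVFiltration T D C V) {β : ℚ}
    (hβ : β ≠ 0) {u : M} (hu : u ∈ V β) (hDT : D (T u) ∈ VFilt.gt V β) : u ∈ VFilt.gt V β := by
  obtain ⟨N, -, hN⟩ := hV.nilpotent β
  have hS : -(D * T) ∈ VFilt.A0 T D C := Algebra.subset_adjoin (by simp)
  have hA : -(D * T) + (β : k) • (1 : Module.End k M) ∈ VFilt.A0 T D C :=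
    add_mem hS (Subalgebra.smul_mem _ (one_mem _) _)
  have heigen : (-(D * T) + (β : k) • (1 : Module.End k M)) u - (β : k) • u ∈ VFilt.gt V β := by
    simpa using hDT
  exact mem_of_pow_apply_mem_of_apply_sub_smul_mem (hV.gt_mem_invtSubmodule hA β)
    (Rat.cast_ne_zero.mpr hβ) heigen (hN u hu)

end IsWeakVFiltration

theorem stmt3_general {k M : Type*} [Field k] [CharZero k] [AddCommGroup M] [Module k M]
    {T D : Module.End k M} {C : Set (Module.End k M)} {V : ℚ → Submodule k M}
    (hV : IsWeakVFiltration T D C V) {α : ℚ} (hα : α ≤ 0) {u : M} (hu : D (T u) ∈ V α) :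
    u ∈ V α := by
  by_contra hnot
  obtain ⟨β, hβα, hmem, hnotgt⟩ := hV.exists_lt_mem_notMem_gt hnot
  have hβ : β ≠ 0 := (hβα.trans_le hα).ne
  exact hnotgt (hV.mem_gt_of_apply_mem_gt hβ hmem (VFilt.le_gt_of_lt hβα hu))

/-- **Corollary 3.6(i).** If `α ≤ 0` and `T u ∈ V^{α+1}`, then `u ∈ V^α`; in particular
every `u` with `T u = 0` lies in `V^0`. -/
theorem stmt3 {k : Type*} [Field k] [CharZero k]
    {M : Type*} [AddCommGroup M] [Module k M]
    (T D : Module.End k M) (C : Set (Module.End k M))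
    (hweyl : D * T - T * D = 1)
    (hC : ∀ c ∈ C, Commute c T ∧ Commute c D)
    (V : ℚ → Submodule k M) (hV : IsWeakVFiltration T D C V) :
    (∀ α : ℚ, α ≤ 0 → ∀ u : M, T u ∈ V (α + 1) → u ∈ V α) ∧
    (∀ u : M, T u = 0 → u ∈ V 0) := by
  refine ⟨fun α hα u hu => stmt3_general hV hα ?_,
    fun u hu => stmt3_general hV le_rfl (by simp [hu])⟩
  simpa using hV.mapD_le _ (Submodule.mem_map_of_mem hu)
end

section
/- Let (V^α)_{α∈ℚ} be a weak V-filtration on M. If α ∈ ℚ satisfies α ≤ 1 and v ∈ M is such that D(v) ∈ V^{α−1}, then v ∈ V^α. -/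
open Module

/-!
Let `S = -(D * T)`. By the Weyl relation, `T (D v) = -(S + 1) v`, so `D v ∈ V (α - 1)` puts
`(S + 1) v` in `V α`. If `v ∈ V β` with `β < α ≤ 1`, then both `(S + 1) v` and `(S + β)^N v`
lie in `V^{>β}` for some `N`. Since `β ≠ 1`, the polynomials `X + 1` and `(X + β)^N` are coprime
and a Bézout relation puts `v` itself in `V^{>β}`. By discreteness, `v` climbs to `V α` in finitely
many such steps.
-/

open Polynomial

theorem mem_of_isCoprime_of_aeval_mem {R M : Type*} [CommSemiring R] [AddCommMonoid M]
    [Module R M] {f : Module.End R M} {W : Submodule R M} (hW : W ∈ f.invtSubmodule)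
    {p q : R[X]} (hpq : IsCoprime p q) {v : M} (hp : aeval f p v ∈ W) (hq : aeval f q v ∈ W) :
    v ∈ W := by
  obtain ⟨a, b, hab⟩ := hpq
  have bezout : aeval f a (aeval f p v) + aeval f b (aeval f q v) = v := by
    simpa using LinearMap.congr_fun (congrArg (aeval f) hab) v
  rw [← bezout]
  exact W.add_mem (aeval_apply_smul_mem_of_le_comap hp a f hW)
    (aeval_apply_smul_mem_of_le_comap hq b f hW)

theorem iSup_mem_invtSubmodule {R M : Type*} {ι : Sort*} [Semiring R] [AddCommMonoid M]
    [Module R M] {f : Module.End R M} {W : ι → Submodule R M} (hW : ∀ i, W i ∈ f.invtSubmodule) :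
    ⨆ i, W i ∈ f.invtSubmodule :=
  iSup_le fun i ↦ (hW i).trans (Submodule.comap_mono (le_iSup W i))

theorem isCoprime_X_sub_C_pow_of_eval_ne_zero {k : Type*} [Field k] {p : k[X]} {a : k}
    (ha : p.eval a ≠ 0) (n : ℕ) : IsCoprime p ((X - C a) ^ n) := by
  refine IsCoprime.pow_right (IsCoprime.symm ?_)
  rwa [(irreducible_X_sub_C a).coprime_iff_not_dvd, dvd_iff_isRoot]

theorem VFilt.le_gt {k M : Type*} [Field k] [AddCommGroup M] [Module k M]
    (V : ℚ → Submodule k M) {α β : ℚ} (h : β < α) : V α ≤ VFilt.gt V β :=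
  le_iSup₂_of_le α h le_rfl

namespace IsWeakVFiltration

variable {k : Type*} [Field k] {M : Type*} [AddCommGroup M] [Module k M]
  {T D : Module.End k M} {C : Set (Module.End k M)} {V : ℚ → Submodule k M}
  {α β : ℚ} {v : M}

theorem exists_gt_le (hV : IsWeakVFiltration T D C V) :
    ∃ ℓ : ℕ, 0 < ℓ ∧ ∀ i : ℤ, VFilt.gt V ((i : ℚ) / ℓ) ≤ V ((i + 1 : ℚ) / ℓ) := by
  obtain ⟨ℓ, hℓ, hconst⟩ := hV.discrete
  refine ⟨ℓ, hℓ, fun i ↦ iSup₂_le fun β hβ ↦ ?_⟩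
  rcases le_total β ((i + 1 : ℚ) / ℓ) with hle | hge
  · exact (hconst i β _ ⟨hβ, hle⟩ ⟨hβ.trans_le hle, le_rfl⟩).le
  · exact hV.antitone hge

theorem mem_of_forall_mem_gt (hV : IsWeakVFiltration T D C V)
    (h : ∀ β < α, v ∈ V β → v ∈ VFilt.gt V β) : v ∈ V α := by
  by_contra hv
  obtain ⟨ℓ, hℓ_pos, hjump⟩ := hV.exists_gt_le
  obtain ⟨γ, hγ⟩ := hV.exhaustive v
  have hℓ : (0 : ℚ) < ℓ := Nat.cast_pos.2 hℓ_pos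
  have hmem : ∀ i : ℤ, ⌊γ * ℓ⌋ ≤ i → v ∈ V ((i : ℚ) / ℓ) := by
    intro i hi
    induction i, hi using Int.leInduction with
    | base => exact hV.antitone ((div_le_iff₀ hℓ).2 (Int.floor_le _)) hγ
    | succ i _ ih =>
      have hlt : (i : ℚ) / ℓ < α := lt_of_not_ge fun hle ↦ hv (hV.antitone hle ih)
      exact_mod_cast hjump i (h _ hlt ih)
  have hle : α ≤ (max ⌊γ * ℓ⌋ ⌈α * ℓ⌉ : ℤ) / ℓ :=
    (le_div_iff₀ hℓ).2 (Int.ceil_le.1 (le_max_right _ _))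
  exact hv (hV.antitone hle (hmem _ (le_max_left _ _)))

theorem mem_invtSubmodule (hV : IsWeakVFiltration T D C V) (α : ℚ) :
    V α ∈ (-(D * T)).invtSubmodule :=
  (Module.End.mem_invtSubmodule_iff_map_le _).2 <|
    hV.stable _ (Algebra.subset_adjoin (by simp)) α

theorem gt_mem_invtSubmodule_s4 (hV : IsWeakVFiltration T D C V) (α : ℚ) :
    VFilt.gt V α ∈ (-(D * T)).invtSubmodule :=
  iSup_mem_invtSubmodule fun β ↦ iSup_mem_invtSubmodule fun _ ↦ hV.mem_invtSubmodule β

theorem exists_aeval_mem_gt (hV : IsWeakVFiltration T D C V) (hv : v ∈ V β) :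
    ∃ N : ℕ, aeval (-(D * T)) ((X - Polynomial.C (-β : k)) ^ N) v ∈ VFilt.gt V β := by
  obtain ⟨N, -, hN⟩ := hV.nilpotent β
  exact ⟨N, by simpa [Algebra.algebraMap_eq_smul_one] using hN v hv⟩

theorem mem_of_aeval_mem (hV : IsWeakVFiltration T D C V) {p : k[X]}
    (hp : ∀ β < α, p.eval (-β : k) ≠ 0) (hv : aeval (-(D * T)) p v ∈ V α) : v ∈ V α := by
  refine hV.mem_of_forall_mem_gt fun β hβ hvβ ↦ ?_
  obtain ⟨N, hN⟩ := hV.exists_aeval_mem_gt hvβ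
  exact mem_of_isCoprime_of_aeval_mem (hV.gt_mem_invtSubmodule_s4 β)
    (isCoprime_X_sub_C_pow_of_eval_ne_zero (hp β hβ) N) (VFilt.le_gt V hβ hv) hN

theorem T_apply_mem (hV : IsWeakVFiltration T D C V) (hv : v ∈ V (α - 1)) : T v ∈ V α := by
  simpa using hV.mapT_le (α - 1) (Submodule.mem_map_of_mem hv)

end IsWeakVFiltration

theorem aeval_X_add_one_eq_neg_mul {R A : Type*} [CommSemiring R] [Ring A] [Algebra R A] {t d : A}
    (h : d * t - t * d = 1) : aeval (-(d * t)) (X + 1 : R[X]) = -(t * d) := by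
  rw [map_add, aeval_X, map_one, ← h]
  abel

theorem stmt4_general {k : Type*} [Field k] [CharZero k]
    {M : Type*} [AddCommGroup M] [Module k M]
    {T D : Module.End k M} {C : Set (Module.End k M)}
    (hweyl : D * T - T * D = 1)
    {V : ℚ → Submodule k M} (hV : IsWeakVFiltration T D C V)
    {α : ℚ} (hα : α ≤ 1) {v : M} (hv : T (D v) ∈ V α) : v ∈ V α := by
  have hroot : ∀ β < α, (X + 1 : k[X]).eval (-β : k) ≠ 0 := by
    intro β hβ
    have hne : (β : k) ≠ 1 := mod_cast (hβ.trans_le hα).ne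
    simpa [neg_add_eq_zero] using hne
  refine hV.mem_of_aeval_mem hroot ?_
  rw [aeval_X_add_one_eq_neg_mul hweyl]
  exact (V α).neg_mem hv

/-- **Corollary 3.6(ii).** If `α ≤ 1` and `D v ∈ V^{α-1}`, then `v ∈ V^α`. -/
theorem stmt4 {k : Type*} [Field k] [CharZero k]
    {M : Type*} [AddCommGroup M] [Module k M]
    (T D : Module.End k M) (C : Set (Module.End k M))
    (hweyl : D * T - T * D = 1)
    (hC : ∀ c ∈ C, Commute c T ∧ Commute c D)
    (V : ℚ → Submodule k M) (hV : IsWeakVFiltration T D C V) :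
    ∀ α : ℚ, α ≤ 1 → ∀ v : M, D v ∈ V (α - 1) → v ∈ V α :=
  fun _ hα _ hv ↦ stmt4_general hweyl hV hα (hV.T_apply_mem hv)
end

section
/- Let (V^α)_{α∈ℚ} be a weak V-filtration on M. Then for every integer m ≥ 1 and every α ∈ ℚ with −m ≤ α < −m+1, one has the equality of k-subspaces V^α = D^m(V^{α+m}) + ∑_{j=0}^{m−1} D^j(V^0), where D^j(·) denotes the image subspace under the j-th iterate of D. -/
open Module

/-!
Modulo the image of `S = -DT`, the operator `(S + α)^N` is the scalar `α^N`, which is invertible for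
`α ≠ 0`. Nilpotency of `S + α` on the graded pieces therefore gives
`V^α ⊆ D(V^{α+1}) + V^{>α}` for `α ≠ 0`. By discreteness, finitely many such steps climb from
`α < 0` to `0`, so that `V^α ⊆ D(V^{α+1}) + V^0` for every `α`; iterating this `m` times yields the
nontrivial inclusion.
-/

section EndSubmodule

variable {R M : Type*} [CommRing R] [AddCommGroup M] [Module R M]

theorem add_smul_one_pow_apply_sub_mem_map {f : End R M} {P : Submodule R M} (hf : P.map f ≤ P)
    (c : R) (n : ℕ) {u : M} (hu : u ∈ P) :
    ((f + c • (1 : End R M)) ^ n) u - c ^ n • u ∈ P.map f := by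
  induction n generalizing u with
  | zero => simp
  | succ n ih =>
    have hfu : f u ∈ P.map f := Submodule.mem_map_of_mem hu
    have hw : f u + c • u ∈ P := P.add_mem (hf hfu) (P.smul_mem c hu)
    have hsplit : ((f + c • (1 : End R M)) ^ (n + 1)) u - c ^ (n + 1) • u =
        (((f + c • (1 : End R M)) ^ n) (f u + c • u) - c ^ n • (f u + c • u)) + c ^ n • f u := by
      rw [pow_succ (f + c • (1 : End R M)), End.mul_apply, pow_succ c, mul_smul, smul_add]
      simp only [LinearMap.add_apply, LinearMap.smul_apply, End.one_apply]
      abel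
    rw [hsplit]
    exact add_mem (ih hw) (Submodule.smul_mem _ _ hfu)

theorem le_map_sup_of_add_smul_one_pow_mem {f : End R M} {P Q : Submodule R M} (hf : P.map f ≤ P)
    {c : R} (hc : IsUnit c) {n : ℕ} (hn : ∀ u ∈ P, ((f + c • (1 : End R M)) ^ n) u ∈ Q) :
    P ≤ P.map f ⊔ Q := by
  intro u hu
  rw [← Submodule.smul_mem_iff_of_isUnit _ (hc.pow n),
    ← sub_sub_cancel (((f + c • (1 : End R M)) ^ n) u) (c ^ n • u)]
  exact sub_mem (Submodule.mem_sup_right (hn u hu))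
    (Submodule.mem_sup_left (add_smul_one_pow_apply_sub_mem_map hf c n hu))

end EndSubmodule

section ShiftedFamily

variable {R M A : Type*} [Semiring R] [AddCommMonoid M] [Module R M]

theorem map_pow_le_sub_natCast [AddGroupWithOne A] {f : End R M} {V : A → Submodule R M}
    (h : ∀ a, (V a).map f ≤ V (a - 1)) (n : ℕ) (a : A) : (V a).map (f ^ n) ≤ V (a - n) := by
  induction n generalizing a with
  | zero => simp [End.one_eq_id]
  | succ n ih =>
    rw [pow_succ, End.mul_eq_comp, Submodule.map_comp, Nat.cast_succ, sub_add_eq_sub_sub_swap]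
    exact (Submodule.map_mono (h a)).trans (ih (a - 1))

theorem le_map_pow_sup_iSup_map_pow [AddMonoidWithOne A] {f : End R M} {V : A → Submodule R M}
    {P : Submodule R M} (h : ∀ a, V a ≤ (V (a + 1)).map f ⊔ P) (m : ℕ) (a : A) :
    V a ≤ (V (a + m)).map (f ^ m) ⊔ ⨆ j ∈ Finset.range m, P.map (f ^ j) := by
  induction m with
  | zero => simp [End.one_eq_id]
  | succ m ih =>
    have hstep : (V (a + m)).map (f ^ m) ≤
        (V (a + (m + 1 : ℕ))).map (f ^ (m + 1)) ⊔ P.map (f ^ m) := by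
      rw [pow_succ, End.mul_eq_comp, Submodule.map_comp, ← Submodule.map_sup, Nat.cast_succ,
        ← add_assoc]
      exact Submodule.map_mono (h (a + m))
    rw [Finset.range_add_one, Finset.iSup_insert, ← sup_assoc]
    exact ih.trans (sup_le_sup_right hstep _)

end ShiftedFamily

section DiscreteFamily

variable {K L : Type*} [Field K] [LinearOrder K] [IsStrictOrderedRing K] [FloorRing K]
  [CompleteLattice L]

theorem iSup_gt_ceil_div_le {V : K → L} (hV : Antitone V) {ℓ : K} (hℓ : 0 < ℓ)
    (hceil : ∀ a, V a = V (⌈a * ℓ⌉ / ℓ)) (a : K) :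
    ⨆ b > ⌈a * ℓ⌉ / ℓ, V b ≤ V (a + 1 / ℓ) := by
  refine iSup₂_le fun b hb => ?_
  have hlt : ⌈a * ℓ⌉ < ⌈b * ℓ⌉ := Int.lt_ceil.2 ((div_lt_iff₀ hℓ).1 hb)
  rw [hceil b]
  apply hV
  rw [le_div_iff₀ hℓ, add_mul, one_div_mul_cancel hℓ.ne']
  calc a * ℓ + 1 ≤ ⌈a * ℓ⌉ + 1 := by gcongr; exact Int.le_ceil _
    _ ≤ ⌈b * ℓ⌉ := by exact_mod_cast hlt

theorem le_sup_of_forall_le_sup_iSup_gt {V W : K → L} (hV : Antitone V)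
    (hW : Antitone W) {ℓ : K} (hℓ : 0 < ℓ) (hceil : ∀ a, V a = V (⌈a * ℓ⌉ / ℓ))
    (h : ∀ a, V a ≤ W a ⊔ ⨆ b > a, V b) (a b : K) : V a ≤ W a ⊔ V b := by
  have hstep (a : K) : V a ≤ W a ⊔ V (a + 1 / ℓ) := calc
    V a = V (⌈a * ℓ⌉ / ℓ) := hceil a
    _ ≤ W (⌈a * ℓ⌉ / ℓ) ⊔ ⨆ b > ⌈a * ℓ⌉ / ℓ, V b := h _
    _ ≤ W a ⊔ V (a + 1 / ℓ) :=
      sup_le_sup (hW ((le_div_iff₀ hℓ).2 (Int.le_ceil _))) (iSup_gt_ceil_div_le hV hℓ hceil a)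
  have hclimb (n : ℕ) : V a ≤ W a ⊔ V (a + n / ℓ) := by
    induction n with
    | zero => simp
    | succ n ih =>
      have hn : W (a + n / ℓ) ≤ W a := hW (le_add_of_nonneg_right (by positivity))
      have hnext := hstep (a + n / ℓ)
      rw [add_assoc, ← add_div, ← Nat.cast_succ] at hnext
      exact ih.trans (sup_le le_sup_left (hnext.trans (sup_le_sup_right hn _)))
  obtain ⟨n, hn⟩ := exists_nat_ge ((b - a) * ℓ)
  have hb : b ≤ a + n / ℓ := sub_le_iff_le_add'.1 ((le_div_iff₀ hℓ).2 hn)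
  exact (hclimb n).trans (sup_le_sup_left (hV hb) _)

end DiscreteFamily

namespace IsWeakVFiltration

variable {k M : Type*} [Field k] [AddCommGroup M] [Module k M]
  {T D : End k M} {C : Set (End k M)} {V : ℚ → Submodule k M}

theorem exists_eq_ceil_div (hV : IsWeakVFiltration T D C V) :
    ∃ ℓ : ℚ, 0 < ℓ ∧ ∀ α, V α = V (⌈α * ℓ⌉ / ℓ) := by
  obtain ⟨ℓ, hℓ, hconst⟩ := hV.discrete
  have hℓ' : (0 : ℚ) < ℓ := by exact_mod_cast hℓ
  refine ⟨ℓ, hℓ', fun α => hconst (⌈α * ℓ⌉ - 1) _ _ ⟨?_, ?_⟩ ⟨?_, ?_⟩⟩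
  · rw [div_lt_iff₀ hℓ']
    push_cast
    linarith [Int.ceil_lt_add_one (α * ℓ)]
  · rw [le_div_iff₀ hℓ']
    push_cast
    linarith [Int.le_ceil (α * ℓ)]
  · gcongr
    exact sub_one_lt _
  · simp

theorem map_neg_mul_le (hV : IsWeakVFiltration T D C V) (α : ℚ) :
    (V α).map (-(D * T)) ≤ (V (α + 1)).map D := by
  rw [Submodule.map_neg, End.mul_eq_comp, Submodule.map_comp]
  exact Submodule.map_mono (hV.mapT_le α)

variable [CharZero k]

theorem le_map_sup_gt (hV : IsWeakVFiltration T D C V) {α : ℚ} (hα : α ≠ 0) :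
    V α ≤ (V (α + 1)).map D ⊔ VFilt.gt V α := by
  obtain ⟨N, -, hN⟩ := hV.nilpotent α
  have hS : (V α).map (-(D * T)) ≤ V α := hV.stable _ (Algebra.subset_adjoin (by simp)) α
  have hunit : IsUnit (α : k) := (Rat.cast_ne_zero.2 hα).isUnit
  exact (le_map_sup_of_add_smul_one_pow_mem hS hunit hN).trans
    (sup_le_sup_right (hV.map_neg_mul_le α) _)

theorem le_map_sup_zero (hV : IsWeakVFiltration T D C V) (α : ℚ) :
    V α ≤ (V (α + 1)).map D ⊔ V 0 := by
  obtain ⟨ℓ, hℓ, hceil⟩ := hV.exists_eq_ceil_div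
  have hanti : Antitone fun β => (V (β + 1)).map D ⊔ V 0 := fun β γ hβγ =>
    sup_le_sup_right (Submodule.map_mono (hV.antitone (by gcongr))) _
  have hgt (β : ℚ) : V β ≤ ((V (β + 1)).map D ⊔ V 0) ⊔ VFilt.gt V β := by
    rcases eq_or_ne β 0 with rfl | hβ
    · exact le_sup_of_le_left le_sup_right
    · exact (hV.le_map_sup_gt hβ).trans (sup_le_sup_right le_sup_left _)
  simpa only [sup_assoc, sup_idem] using
    le_sup_of_forall_le_sup_iSup_gt hV.antitone hanti hℓ hceil hgt α 0

end IsWeakVFiltration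

theorem stmt5_general {k M : Type*} [Field k] [CharZero k] [AddCommGroup M] [Module k M]
    {T D : End k M} {C : Set (End k M)} {V : ℚ → Submodule k M}
    (hV : IsWeakVFiltration T D C V) {m : ℕ} {α : ℚ} (hα : α ≤ -(m : ℚ) + 1) :
    V α = (V (α + m)).map (D ^ m) ⊔ ⨆ j ∈ Finset.range m, (V 0).map (D ^ j) := by
  refine le_antisymm (le_map_pow_sup_iSup_map_pow hV.le_map_sup_zero m α)
    (sup_le ?_ (iSup₂_le fun j hj => ?_))
  · simpa only [add_sub_cancel_right] using map_pow_le_sub_natCast hV.mapD_le m (α + m)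
  · have hjm : (j : ℚ) + 1 ≤ m := by exact_mod_cast Finset.mem_range.1 hj
    exact (map_pow_le_sub_natCast hV.mapD_le j 0).trans (hV.antitone (by linarith))

/-- **Corollary 3.6(iii).** For `m ≥ 1` and `-m ≤ α < -m+1`, one has
`V^α = D^m(V^{α+m}) + ∑_{j=0}^{m-1} D^j(V^0)`. -/
theorem stmt5 {k : Type*} [Field k] [CharZero k]
    {M : Type*} [AddCommGroup M] [Module k M]
    (T D : Module.End k M) (C : Set (Module.End k M))
    (hweyl : D * T - T * D = 1)
    (hC : ∀ c ∈ C, Commute c T ∧ Commute c D)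
    (V : ℚ → Submodule k M) (hV : IsWeakVFiltration T D C V) :
    ∀ m : ℕ, 1 ≤ m → ∀ α : ℚ, -(m : ℚ) ≤ α → α < -(m : ℚ) + 1 →
      V α = (V (α + m)).map (D ^ m) ⊔ ⨆ j ∈ Finset.range m, (V 0).map (D ^ j) := by
  intro m _ α _ hα
  exact stmt5_general hV hα.le
end

section
/- The following hold: (i) T(N_i) ⊆ N_{i+1} and D(N_i) ⊆ N_{i−1} for every integer i; (ii) N_i = 0 for every integer i > 0, and M is the internal direct sum of the subspaces N_{−m} for m ≥ 0 (the family (N_{−m})_{m≥0} is independent and its sum is all of M); (iii) N_{−m} = D^m(N_0) for every integer m ≥ 0. -/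
/-!
`N i` is the eigenspace `E i` of `D * T` for the eigenvalue `i`. From `⁅D, T⁆ = 1` one gets
`⁅D * T, T⁆ = T` and `⁅D * T, D⁆ = -D`, so `T` raises and `D` lowers the eigenvalue by one. Since
`D * T` acts on `E μ`, and `T * D` on `E (μ + 1)`, as the scalar `μ`, both `T : E μ → E (μ + 1)`
and `D : E (μ + 1) → E μ` are bijective for invertible `μ`. Hence `T` is injective on `E i` for
`i > 0`, where local nilpotence forces `E i = 0`; and `W = ∑ E (-m)` satisfies `W ≤ T W` and
contains `ker T`, hence contains every `ker (T ^ n)`. The sum is direct because distinct integers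
differ by a unit.
-/

open LinearMap Module.End Polynomial

theorem isUnit_intCast_of_ne_zero {R : Type*} [Ring R] [Algebra ℚ R] {i : ℤ} (hi : i ≠ 0) :
    IsUnit (i : R) := by
  simpa only [map_intCast] using (IsUnit.mk0 (i : ℚ) (Int.cast_ne_zero.2 hi)).map (algebraMap ℚ R)

section Lie

variable {A : Type*} [Ring A] {t d : A}

theorem lie_mul_self_right_of_lie_eq_one (h : ⁅d, t⁆ = 1) : ⁅d * t, t⁆ = t := by
  calc ⁅d * t, t⁆ = ⁅d, t⁆ * t := by simp only [Ring.lie_def]; noncomm_ring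
    _ = t := by rw [h, one_mul]

theorem lie_mul_self_left_of_lie_eq_one (h : ⁅d, t⁆ = 1) : ⁅d * t, d⁆ = -d := by
  calc ⁅d * t, d⁆ = -(d * ⁅d, t⁆) := by simp only [Ring.lie_def]; noncomm_ring
    _ = -d := by rw [h, mul_one]

end Lie

section LinearMap

variable {R M : Type*} [Ring R] [AddCommGroup M] [Module R M]

theorem ker_pow_le_of_ker_le_of_le_map {f : Module.End R M} {W : Submodule R M}
    (hker : ker f ≤ W) (hmap : W ≤ W.map f) (n : ℕ) : ker (f ^ n) ≤ W := by
  induction n with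
  | zero => simp [Module.End.one_eq_id]
  | succ n ih =>
    calc ker (f ^ (n + 1)) = (ker (f ^ n)).comap f := by
          rw [pow_succ, Module.End.mul_eq_comp, ker_comp]
      _ ≤ (W.map f).comap f := Submodule.comap_mono (ih.trans hmap)
      _ = W ⊔ ker f := Submodule.comap_map_eq f W
      _ = W := sup_eq_left.2 hker

end LinearMap

section CommRing

variable {ι R M : Type*} [CommRing R] [AddCommGroup M] [Module R M]

theorem map_eq_of_apply_apply_eq_smul {f g : Module.End R M} {p q : Submodule R M} {μ : R}
    (hf : p.map f ≤ q) (hg : q.map g ≤ p) (hμ : IsUnit μ) (hfg : ∀ u ∈ q, f (g u) = μ • u) :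
    p.map f = q := by
  refine hf.antisymm fun u hu ↦ ?_
  obtain ⟨ν, hν⟩ := hμ.exists_left_inv
  refine ⟨ν • g u, p.smul_mem ν (hg ⟨u, hu, rfl⟩), ?_⟩
  rw [map_smul, hfg u hu, smul_smul, hν, one_smul]

theorem iSupIndep_ker_aeval_of_pairwise_isCoprime (f : Module.End R M) {p : ι → R[X]}
    (hp : Pairwise (Function.onFun IsCoprime p)) : iSupIndep fun i ↦ ker (aeval f (p i)) := by
  classical
  rw [iSupIndep_iff_supIndep]
  intro s
  rw [Finset.supIndep_iff_disjoint_erase]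
  intro i _
  have hcoprime : IsCoprime (p i) (∏ j ∈ s.erase i, p j) :=
    IsCoprime.prod_right fun j hj ↦ hp (Finset.ne_of_mem_erase hj).symm
  refine (disjoint_ker_aeval_of_isCoprime f hcoprime).mono_right (Finset.sup_le fun j hj u hu ↦ ?_)
  obtain ⟨q, hq⟩ := Finset.dvd_prod_of_mem p hj
  rw [mem_ker, hq, mul_comm, map_mul, Module.End.mul_apply, mem_ker.1 hu, map_zero]

theorem iSupIndep_eigenspace_of_pairwise_isUnit_sub (f : Module.End R M) {μ : ι → R}
    (hμ : Pairwise fun i j ↦ IsUnit (μ i - μ j)) : iSupIndep fun i ↦ f.eigenspace (μ i) := by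
  have h := iSupIndep_ker_aeval_of_pairwise_isCoprime f (p := fun i ↦ X - C (μ i))
    fun i j hij ↦ isCoprime_X_sub_C_of_isUnit_sub (hμ hij)
  simpa only [map_sub, aeval_X, aeval_C, eigenspace_def, Algebra.algebraMap_eq_smul_one] using h

theorem ker_neg_add_smul_one (f : Module.End R M) (μ : R) :
    ker (-f + μ • (1 : Module.End R M)) = f.eigenspace μ := by
  ext u
  simp only [mem_ker, mem_eigenspace_iff, LinearMap.add_apply, LinearMap.neg_apply,
    LinearMap.smul_apply, Module.End.one_apply, neg_add_eq_zero]

theorem map_eigenspace_le_of_lie_eq_smul {f g : Module.End R M} {c : R} (h : ⁅f, g⁆ = c • g)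
    (μ : R) : (f.eigenspace μ).map g ≤ f.eigenspace (μ + c) := by
  rintro _ ⟨u, hu, rfl⟩
  have hfg : f (g u) - g (f u) = c • g u := LinearMap.congr_fun h u
  rw [mem_eigenspace_iff.1 hu, map_smul, sub_eq_iff_eq_add'] at hfg
  rw [mem_eigenspace_iff, hfg, add_smul]

end CommRing

section Weyl

variable {R M : Type*} [CommRing R] [AddCommGroup M] [Module R M] {T D : Module.End R M}

theorem map_right_eigenspace_mul_le (h : ⁅D, T⁆ = 1) (μ : R) :
    ((D * T).eigenspace μ).map T ≤ (D * T).eigenspace (μ + 1) :=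
  map_eigenspace_le_of_lie_eq_smul (by rw [lie_mul_self_right_of_lie_eq_one h, one_smul]) μ

theorem map_left_eigenspace_mul_le (h : ⁅D, T⁆ = 1) (μ : R) :
    ((D * T).eigenspace μ).map D ≤ (D * T).eigenspace (μ - 1) := by
  rw [sub_eq_add_neg]
  exact map_eigenspace_le_of_lie_eq_smul
    (by rw [lie_mul_self_left_of_lie_eq_one h, neg_smul, one_smul]) μ

theorem map_left_eigenspace_mul_add_one_le (h : ⁅D, T⁆ = 1) (μ : R) :
    ((D * T).eigenspace (μ + 1)).map D ≤ (D * T).eigenspace μ := by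
  simpa only [add_sub_cancel_right] using map_left_eigenspace_mul_le h (μ + 1)

theorem map_right_eigenspace_mul (h : ⁅D, T⁆ = 1) {μ : R} (hμ : IsUnit μ) :
    ((D * T).eigenspace μ).map T = (D * T).eigenspace (μ + 1) := by
  refine map_eq_of_apply_apply_eq_smul (map_right_eigenspace_mul_le h μ)
    (map_left_eigenspace_mul_add_one_le h μ) hμ fun u hu ↦ ?_
  have hDT : D (T u) = (μ + 1) • u := mem_eigenspace_iff.1 hu
  have hweyl : D (T u) - T (D u) = u := LinearMap.congr_fun h u
  calc T (D u) = D (T u) - u := eq_sub_iff_add_eq'.2 (sub_eq_iff_eq_add.1 hweyl).symm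
    _ = μ • u := by rw [hDT, add_smul, one_smul, add_sub_cancel_right]

theorem map_left_eigenspace_mul_add_one (h : ⁅D, T⁆ = 1) {μ : R} (hμ : IsUnit μ) :
    ((D * T).eigenspace (μ + 1)).map D = (D * T).eigenspace μ :=
  map_eq_of_apply_apply_eq_smul (map_left_eigenspace_mul_add_one_le h μ)
    (map_right_eigenspace_mul_le h μ) hμ fun _ hu ↦ mem_eigenspace_iff.1 hu

theorem map_left_pow_eigenspace_mul_add_natCast (h : ⁅D, T⁆ = 1) {μ : R} {n : ℕ}
    (hμ : ∀ m < n, IsUnit (μ + m)) :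
    ((D * T).eigenspace (μ + n)).map (D ^ n) = (D * T).eigenspace μ := by
  induction n with
  | zero => simp [Module.End.one_eq_id]
  | succ n ih =>
    rw [pow_succ, Module.End.mul_eq_comp, Submodule.map_comp, Nat.cast_succ, ← add_assoc,
      map_left_eigenspace_mul_add_one h (hμ n n.lt_succ_self),
      ih fun m hm ↦ hμ m (hm.trans n.lt_succ_self)]

theorem disjoint_eigenspace_mul_ker {μ : R} (hμ : IsUnit μ) :
    Disjoint ((D * T).eigenspace μ) (ker T) := by
  rw [Submodule.disjoint_def]
  intro u hu hTu
  have hDT : D (T u) = μ • u := mem_eigenspace_iff.1 hu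
  rw [mem_ker.1 hTu, map_zero] at hDT
  exact hμ.smul_eq_zero.1 hDT.symm

theorem disjoint_eigenspace_mul_ker_pow (h : ⁅D, T⁆ = 1) {μ : R} {n : ℕ}
    (hμ : ∀ m < n, IsUnit (μ + m)) : Disjoint ((D * T).eigenspace μ) (ker (T ^ n)) := by
  induction n generalizing μ with
  | zero => simp [Module.End.one_eq_id]
  | succ n ih =>
    have hμ₀ : IsUnit μ := by simpa only [Nat.cast_zero, add_zero] using hμ 0 n.succ_pos
    have hμ₁ : ∀ m < n, IsUnit (μ + 1 + m) := fun m hm ↦ by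
      simpa only [Nat.cast_succ, add_assoc, add_comm (1 : R)] using hμ (m + 1) (Nat.succ_lt_succ hm)
    rw [Submodule.disjoint_def]
    intro u hu hTu
    rw [mem_ker, pow_succ, Module.End.mul_apply] at hTu
    have hTu₀ : T u = 0 := Submodule.disjoint_def.1 (ih hμ₁) (T u)
      (map_right_eigenspace_mul_le h μ ⟨u, hu, rfl⟩) hTu
    exact Submodule.disjoint_def.1 (disjoint_eigenspace_mul_ker hμ₀) u hu hTu₀

theorem eigenspace_mul_eq_bot (h : ⁅D, T⁆ = 1) (htors : ∀ u : M, ∃ m : ℕ, (T ^ m) u = 0) {μ : R}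
    (hμ : ∀ m : ℕ, IsUnit (μ + m)) : (D * T).eigenspace μ = ⊥ := by
  refine (Submodule.eq_bot_iff _).2 fun u hu ↦ ?_
  obtain ⟨n, hn⟩ := htors u
  exact Submodule.disjoint_def.1 (disjoint_eigenspace_mul_ker_pow h fun m _ ↦ hμ m) u hu hn

theorem ker_le_eigenspace_mul_zero : ker T ≤ (D * T).eigenspace 0 := by
  rw [eigenspace_zero]
  exact ker_le_ker_comp T D

variable [Algebra ℚ R]

theorem eigenspace_mul_neg_natCast_eq_map_pow (h : ⁅D, T⁆ = 1) (m : ℕ) :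
    (D * T).eigenspace (-m : R) = ((D * T).eigenspace 0).map (D ^ m) := by
  have hunit : ∀ n < m, IsUnit (-m + n : R) := fun n hn ↦ by
    simpa using isUnit_intCast_of_ne_zero (R := R) (i := -m + n) (by lia)
  simpa only [neg_add_cancel] using (map_left_pow_eigenspace_mul_add_natCast h hunit).symm

theorem iSupIndep_eigenspace_neg_natCast (f : Module.End R M) :
    iSupIndep fun m : ℕ ↦ f.eigenspace (-m : R) :=
  iSupIndep_eigenspace_of_pairwise_isUnit_sub f fun i j hij ↦ by
    simpa using isUnit_intCast_of_ne_zero (R := R) (i := -i - -j) (by lia)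

theorem iSup_eigenspace_mul_neg_natCast_le_map (h : ⁅D, T⁆ = 1) :
    ⨆ m : ℕ, (D * T).eigenspace (-m : R) ≤ (⨆ m : ℕ, (D * T).eigenspace (-m : R)).map T := by
  refine iSup_le fun m ↦ ?_
  have hunit : IsUnit (-(m + 1 : ℕ) : R) := by
    simpa using isUnit_intCast_of_ne_zero (R := R) (i := -(m + 1 : ℕ)) (by lia)
  calc (D * T).eigenspace (-m : R)
      = (D * T).eigenspace (-(m + 1 : ℕ) + 1 : R) := by push_cast; congr 1; ring
    _ = ((D * T).eigenspace (-(m + 1 : ℕ) : R)).map T :=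
      (map_right_eigenspace_mul h hunit).symm
    _ ≤ (⨆ m : ℕ, (D * T).eigenspace (-m : R)).map T :=
      Submodule.map_mono (le_iSup (fun m : ℕ ↦ (D * T).eigenspace (-m : R)) (m + 1))

theorem iSup_eigenspace_mul_neg_natCast_eq_top (h : ⁅D, T⁆ = 1)
    (htors : ∀ u : M, ∃ m : ℕ, (T ^ m) u = 0) : ⨆ m : ℕ, (D * T).eigenspace (-m : R) = ⊤ := by
  have hker : ker T ≤ ⨆ m : ℕ, (D * T).eigenspace (-m : R) :=
    le_iSup_of_le 0 (by simpa only [Nat.cast_zero, neg_zero] using ker_le_eigenspace_mul_zero)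
  refine eq_top_iff.2 fun u _ ↦ ?_
  obtain ⟨n, hn⟩ := htors u
  exact ker_pow_le_of_ker_le_of_le_map hker (iSup_eigenspace_mul_neg_natCast_le_map h) n hn

theorem isInternal_eigenspace_mul_neg_natCast (h : ⁅D, T⁆ = 1)
    (htors : ∀ u : M, ∃ m : ℕ, (T ^ m) u = 0) :
    DirectSum.IsInternal fun m : ℕ ↦ (D * T).eigenspace (-m : R) :=
  DirectSum.isInternal_submodule_of_iSupIndep_of_iSup_eq_top
    (iSupIndep_eigenspace_neg_natCast (D * T)) (iSup_eigenspace_mul_neg_natCast_eq_top h htors)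

end Weyl

theorem stmt8_general {k : Type*} [CommRing k] [Algebra ℚ k]
    {M : Type*} [AddCommGroup M] [Module k M]
    (T D : Module.End k M) (hweyl : D * T - T * D = 1)
    (htors : ∀ u : M, ∃ m : ℕ, (T ^ m) u = 0)
    (N : ℤ → Submodule k M)
    (hN : ∀ i : ℤ, N i = LinearMap.ker (-(D * T) + (i : k) • (1 : Module.End k M))) :
    (∀ i : ℤ, (N i).map T ≤ N (i + 1) ∧ (N i).map D ≤ N (i - 1)) ∧
    ((∀ i : ℤ, 0 < i → N i = ⊥) ∧ DirectSum.IsInternal fun m : ℕ => N (-(m : ℤ))) ∧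
    (∀ m : ℕ, N (-(m : ℤ)) = (N 0).map (D ^ m)) := by
  obtain rfl : N = fun i : ℤ ↦ (D * T).eigenspace (i : k) :=
    funext fun i ↦ by rw [hN, ker_neg_add_smul_one]
  rw [← Ring.lie_def] at hweyl
  push_cast
  refine ⟨fun i ↦ ⟨map_right_eigenspace_mul_le hweyl i, map_left_eigenspace_mul_le hweyl i⟩,
    ⟨fun i hi ↦ eigenspace_mul_eq_bot hweyl htors fun m ↦ ?_,
      isInternal_eigenspace_mul_neg_natCast hweyl htors⟩,
    eigenspace_mul_neg_natCast_eq_map_pow hweyl⟩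
  simpa using isUnit_intCast_of_ne_zero (R := k) (i := i + m) (by lia)

/-- **Example 3.9 (steps in Kashiwara's Equivalence Theorem).** Let `T`, `D` satisfy the
Weyl relation, with every element of `M` annihilated by a power of `T`, and set
`N_i = ker(S + i·id)` where `S = -(D∘T)`. Then:
(i) `T(N_i) ⊆ N_{i+1}` and `D(N_i) ⊆ N_{i-1}`;
(ii) `N_i = 0` for `i > 0` and `M = ⊕_{m ≥ 0} N_{-m}` (internal direct sum);
(iii) `N_{-m} = D^m(N_0)` for every `m ≥ 0`. -/
theorem stmt8 {k : Type*} [Field k] [CharZero k]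
    {M : Type*} [AddCommGroup M] [Module k M]
    (T D : Module.End k M) (hweyl : D * T - T * D = 1)
    (htors : ∀ u : M, ∃ m : ℕ, (T ^ m) u = 0)
    (N : ℤ → Submodule k M)
    (hN : ∀ i : ℤ, N i = LinearMap.ker (-(D * T) + (i : k) • (1 : Module.End k M))) :
    (∀ i : ℤ, (N i).map T ≤ N (i + 1) ∧ (N i).map D ≤ N (i - 1)) ∧
    ((∀ i : ℤ, 0 < i → N i = ⊥) ∧ DirectSum.IsInternal fun m : ℕ => N (-(m : ℤ))) ∧
    (∀ m : ℕ, N (-(m : ℤ)) = (N 0).map (D ^ m)) :=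
  stmt8_general T D hweyl htors N hN
end

section
/- Assume that A0 is a left Noetherian ring. If M admits a pre-V-filtration (W^i)_{i∈ℤ}, then M admits a V-filtration (V^α)_{α∈ℚ}. Moreover, if all the roots of the polynomial p attached to the pre-V-filtration W lie in the interval [0,1), then this V-filtration satisfies V^i = W^i for every integer i. -/
open Module

/-- A pre-`V`-filtration on `M` (indexed by `ℤ`), with associated polynomial `p`. -/
structure IsPreVFiltration {k : Type*} [Field k] [CharZero k]
    {M : Type*} [AddCommGroup M] [Module k M]
    (T D : Module.End k M) (C : Set (Module.End k M))
    (W : ℤ → Submodule k M) (p : Polynomial k) : Prop where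
  antitone : Antitone W
  exhaustive : ∀ m : M, ∃ i : ℤ, m ∈ W i
  stable : ∀ a ∈ VFilt.A0 T D C, ∀ i : ℤ, (W i).map a ≤ W i
  mapT_le : ∀ i : ℤ, (W i).map T ≤ W (i + 1)
  mapD_le : ∀ i : ℤ, (W i).map D ≤ W (i - 1)
  fg : ∀ i : ℤ, ∃ F : Finset M, (↑F : Set M) ⊆ (W i : Set M) ∧
    ∀ U : Submodule k M, (∀ a ∈ VFilt.A0 T D C, U.map a ≤ U) →
      (↑F : Set M) ⊆ (U : Set M) → W i ≤ U
  eventually : ∃ i₀ : ℤ, ∀ i : ℤ, i₀ ≤ i → W (i + 1) = (W i).map T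
  p_ne : p ≠ 0
  p_factors : ∃ (c : k) (L : Multiset ℚ),
    p = Polynomial.C c * (L.map fun q : ℚ => Polynomial.X - Polynomial.C (q : k)).prod
  p_spec : ∀ i : ℤ, (W i).map
      (Polynomial.aeval (D * T - (i : k) • (1 : Module.End k M)) p) ≤ W (i + 1)

/-!
Put `θ = D ∘ T`, so that `S = -θ`. Iterating the polynomial `p`, a product of translates
`p(θ - i)` carries `W m` into `W j`; hence modulo any step of `W` every vector is a sum of
generalized eigenvectors of `θ`, with eigenvalues integer translates of the roots of `p`. Let `V^α`
consist of the vectors involving only eigenvalues `≥ α` modulo every step. Since the possible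
eigenvalues are finitely many translates of `ℤ`, the jumps of `V` lie in some `(1/ℓ)ℤ`, and each
`V^α` lies between two steps of `W`, which gives finite generation by noetherianity. If the roots of
`p` lie in `[0, 1)`, the eigenvalues on `W i / W (i + 1)` lie in `[i, i + 1)`, whence `V^i = W i`.
The operators `T` and `D` shift eigenvalues by `1` and `-1`. Finally `θ - 1 = T ∘ D` carries
`V^{α+1}` into `T(V^α)`, so `1` is the only possible eigenvalue on `V^{α+1} / T(V^α)`, whereas
the eigenvalues on `V^{α+1}` are at least `α + 1 > 1` when `α > 0`; the quotient therefore vanishes.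
-/

open Polynomial

namespace VFilt

section RootSaturation

variable {k : Type*} [Field k] {A B : Set k} {b c : k[X]}

/-- The predicate "`b` is a nonzero split polynomial with all its roots in `A`". -/
def SplitsIn (A : Set k) (b : k[X]) : Prop :=
  b ≠ 0 ∧ b.Splits ∧ ∀ x, b.IsRoot x → x ∈ A

lemma SplitsIn.mono (hb : SplitsIn A b) (hAB : A ⊆ B) : SplitsIn B b :=
  ⟨hb.1, hb.2.1, fun x hx => hAB (hb.2.2 x hx)⟩

lemma SplitsIn.one : SplitsIn A 1 :=
  ⟨one_ne_zero, Splits.one, fun _ hx => absurd hx (by simp [IsRoot])⟩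

lemma SplitsIn.X_sub_C (x : k) : SplitsIn {x} (X - C x) :=
  ⟨X_sub_C_ne_zero x, Splits.X_sub_C x, fun _ hy => (root_X_sub_C.1 hy).symm⟩

lemma SplitsIn.mul (hb : SplitsIn A b) (hc : SplitsIn A c) : SplitsIn A (b * c) :=
  ⟨mul_ne_zero hb.1 hc.1, hb.2.1.mul hc.2.1, fun x hx =>
    (root_mul.1 hx).elim (hb.2.2 x) (hc.2.2 x)⟩

lemma SplitsIn.of_dvd (hb : SplitsIn A b) (hc : c ∣ b) : SplitsIn A c :=
  ⟨ne_zero_of_dvd_ne_zero hb.1 hc, hb.2.1.of_dvd hb.1 hc, fun x hx => hb.2.2 x (hx.dvd hc)⟩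

lemma SplitsIn.inter (hA : SplitsIn A b) (hB : SplitsIn B b) : SplitsIn (A ∩ B) b :=
  ⟨hA.1, hA.2.1, fun x hx => ⟨hA.2.2 x hx, hB.2.2 x hx⟩⟩

lemma SplitsIn.comp_X_sub_C {x : k} (hb : SplitsIn A b) (hAB : Set.MapsTo (· + x) A B) :
    SplitsIn B (b.comp (X - C x)) := by
  refine ⟨?_, hb.2.1.comp_X_sub_C x, fun y hy => ?_⟩
  · exact fun h => hb.1 ((comp_eq_zero_iff.1 h).resolve_right fun h' => X_sub_C_ne_zero x <| by
      simpa using congrArg natDegree h'.2)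
  · have hyx : b.IsRoot (y - x) := by simpa [IsRoot, eval_comp] using hy
    simpa using hAB (hb.2.2 _ hyx)

lemma SplitsIn.isUnit_of_empty (hb : SplitsIn ∅ b) : IsUnit b := by
  rw [isUnit_iff_degree_eq_zero]
  by_contra hdeg
  obtain ⟨x, hx⟩ := hb.2.1.exists_eval_eq_zero hdeg
  exact hb.2.2 x hx

lemma semiconjBy_aeval {R S : Type*} [CommSemiring R] [Semiring S] [Algebra R S] {a x y : S}
    (h : SemiconjBy a x y) (f : R[X]) : SemiconjBy a (aeval x f) (aeval y f) := by
  induction f using Polynomial.induction_on' with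
  | add f g hf hg => simpa only [map_add] using hf.add_right hg
  | monomial n r =>
    simpa only [aeval_monomial] using
      SemiconjBy.mul_right (Algebra.commutes r a).symm (h.pow_right n)

lemma aeval_comp_X_sub_C {R S : Type*} [CommRing R] [Ring S] [Algebra R S] (s : S) (r : R)
    (f : R[X]) : aeval s (f.comp (X - C r)) = aeval (s - r • (1 : S)) f := by
  rw [aeval_comp, map_sub, aeval_X, aeval_C, Algebra.algebraMap_eq_smul_one]

variable {M : Type*} [AddCommGroup M] [Module k M] {θ : Module.End k M} {N N' : Submodule k M}

/-- The vectors carried into `N` by `b(θ)` for some `b` splitting with roots in `A`. It is the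
preimage of the part of `M ⧸ N` where the generalized eigenvalues of `θ` lie in `A`, provided that
`N` is `θ`-stable; only then is the supremum a directed union. -/
noncomputable def rootSaturation (θ : Module.End k M) (A : Set k) (N : Submodule k M) :
    Submodule k M :=
  ⨆ b : {b : k[X] // SplitsIn A b}, N.comap (aeval θ b.1)

lemma aeval_apply_mem (hN : N ∈ θ.invtSubmodule) (f : k[X]) {u : M} (hu : u ∈ N) :
    aeval θ f u ∈ N :=
  aeval_apply_smul_mem_of_le_comap hu f θ hN

lemma mem_rootSaturation_of_aeval_mem {u : M} (hb : SplitsIn A b) (hu : aeval θ b u ∈ N) :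
    u ∈ rootSaturation θ A N :=
  Submodule.mem_iSup_of_mem (⟨b, hb⟩ : {b : k[X] // SplitsIn A b}) hu

lemma mem_rootSaturation (hN : N ∈ θ.invtSubmodule) {u : M} :
    u ∈ rootSaturation θ A N ↔ ∃ b, SplitsIn A b ∧ aeval θ b u ∈ N := by
  have : Nonempty {b : k[X] // SplitsIn A b} := ⟨⟨1, SplitsIn.one⟩⟩
  have hdir : Directed (· ≤ ·)
      fun b : {b : k[X] // SplitsIn A b} => N.comap (aeval θ b.1) := by
    refine fun b c => ⟨⟨b * c, b.2.mul c.2⟩, fun u hu => ?_, fun u hu => ?_⟩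
    · simp only [Submodule.mem_comap, mul_comm b.1, map_mul]
      exact aeval_apply_mem hN _ hu
    · simp only [Submodule.mem_comap, map_mul]
      exact aeval_apply_mem hN _ hu
  rw [rootSaturation, Submodule.mem_iSup_of_directed _ hdir]
  simp only [Submodule.mem_comap, Subtype.exists, exists_prop]

lemma map_rootSaturation_le {x : k} {a : Module.End k M}
    (ha : SemiconjBy a θ (θ - x • (1 : Module.End k M))) (haN : N.map a ≤ N')
    (hAB : Set.MapsTo (· + x) A B) :
    (rootSaturation θ A N).map a ≤ rootSaturation θ B N' := by
  rw [rootSaturation, Submodule.map_iSup]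
  refine iSup_le ?_
  rintro ⟨b, hb⟩ _ ⟨u, hu, rfl⟩
  refine mem_rootSaturation_of_aeval_mem (hb.comp_X_sub_C hAB) ?_
  rw [aeval_comp_X_sub_C, ← Module.End.mul_apply, ← (semiconjBy_aeval ha b).eq]
  exact haN (Submodule.mem_map_of_mem hu)

lemma rootSaturation_mono (hAB : A ⊆ B) (hN : N ≤ N') :
    rootSaturation θ A N ≤ rootSaturation θ B N' :=
  iSup_le fun b _ hu => mem_rootSaturation_of_aeval_mem (b.2.mono hAB) (hN hu)

lemma rootSaturation_empty : rootSaturation θ ∅ N = N := by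
  refine le_antisymm (iSup_le fun b u hu => ?_) fun u hu =>
    mem_rootSaturation_of_aeval_mem SplitsIn.one (by simpa using hu)
  obtain ⟨r, hr, hrb⟩ := isUnit_iff.1 b.2.isUnit_of_empty
  rw [Submodule.mem_comap, ← hrb, aeval_C, Module.algebraMap_end_apply] at hu
  exact (N.smul_mem_iff hr.ne_zero).1 hu

-- If `f(θ)` and `g(θ)` both carry `u` into `N`, so does `gcd f g`, by Bézout.
lemma rootSaturation_inf_le (hN : N ∈ θ.invtSubmodule) :
    rootSaturation θ A N ⊓ rootSaturation θ B N ≤ rootSaturation θ (A ∩ B) N := by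
  classical
  rintro u ⟨huA, huB⟩
  obtain ⟨f, hf, hfu⟩ := (mem_rootSaturation hN).1 huA
  obtain ⟨g, hg, hgu⟩ := (mem_rootSaturation hN).1 huB
  refine mem_rootSaturation_of_aeval_mem (b := EuclideanDomain.gcd f g)
    ((hf.of_dvd (EuclideanDomain.gcd_dvd_left f g)).inter
      (hg.of_dvd (EuclideanDomain.gcd_dvd_right f g))) ?_
  rw [EuclideanDomain.gcd_eq_gcd_ab, mul_comm f, mul_comm g, map_add, map_mul, map_mul]
  exact N.add_mem (aeval_apply_mem hN _ hfu) (aeval_apply_mem hN _ hgu)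

lemma rootSaturation_inf_le_of_disjoint (hN : N ∈ θ.invtSubmodule) (hAB : Disjoint A B) :
    rootSaturation θ A N ⊓ rootSaturation θ B N ≤ N := by
  simpa only [hAB.inter_eq, rootSaturation_empty] using rootSaturation_inf_le (A := A) (B := B) hN

lemma rootSaturation_rootSaturation_le (hN : N ∈ θ.invtSubmodule) :
    rootSaturation θ A (rootSaturation θ B N) ≤ rootSaturation θ (A ∪ B) N := by
  refine iSup_le fun b u hu => ?_
  obtain ⟨c, hc, hcu⟩ := (mem_rootSaturation hN).1 hu
  refine mem_rootSaturation_of_aeval_mem (b := c * b.1)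
    ((hc.mono Set.subset_union_right).mul (b.2.mono Set.subset_union_left)) ?_
  rwa [map_mul]

end RootSaturation

section RootFiltration

variable {k : Type*} [Field k] {M : Type*} [AddCommGroup M] [Module k M]
  {θ : Module.End k M} {W : ℤ → Submodule k M} {A A' B : Set k}

/-- The vectors which, modulo every step of the filtration `W`, only involve generalized
eigenvalues of `θ` lying in `A`. -/
noncomputable def rootFiltration (θ : Module.End k M) (W : ℤ → Submodule k M) (A : Set k) :
    Submodule k M :=
  ⨅ j, rootSaturation θ A (W j)

lemma rootFiltration_mono (hA : A ⊆ A') : rootFiltration θ W A ≤ rootFiltration θ W A' :=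
  iInf_mono fun _ => rootSaturation_mono hA le_rfl

lemma map_rootFiltration_le {x : k} (n : ℤ) {a : Module.End k M}
    (ha : SemiconjBy a θ (θ - x • (1 : Module.End k M)))
    (haW : ∀ j, (W j).map a ≤ W (j + n)) (hAA' : Set.MapsTo (· + x) A A') :
    (rootFiltration θ W A).map a ≤ rootFiltration θ W A' := by
  refine le_iInf fun j => (Submodule.map_mono (iInf_le _ (j - n))).trans ?_
  exact map_rootSaturation_le ha (by simpa using haW (j - n)) hAA'

lemma map_rootFiltration_le_of_commute {a : Module.End k M} (ha : Commute a θ)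
    (haW : ∀ j, (W j).map a ≤ W j) : (rootFiltration θ W A).map a ≤ rootFiltration θ W A :=
  map_rootFiltration_le (x := 0) 0 (by simpa using ha.semiconjBy) (by simpa using haW)
    (fun y hy => by simpa using hy)

lemma rootFiltration_mem_invtSubmodule (hW : ∀ j, W j ∈ θ.invtSubmodule) :
    rootFiltration θ W A ∈ θ.invtSubmodule :=
  (Module.End.mem_invtSubmodule_iff_map_le θ).2 <|
    map_rootFiltration_le_of_commute (Commute.refl θ) fun j =>
      (Module.End.mem_invtSubmodule_iff_map_le θ).1 (hW j)

lemma rootFiltration_inf_le (hW : ∀ j, W j ∈ θ.invtSubmodule) :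
    rootFiltration θ W A ⊓ rootFiltration θ W A' ≤ rootFiltration θ W (A ∩ A') :=
  le_iInf fun j => (inf_le_inf (iInf_le _ j) (iInf_le _ j)).trans (rootSaturation_inf_le (hW j))

lemma rootSaturation_rootFiltration_le (hW : ∀ j, W j ∈ θ.invtSubmodule) :
    rootSaturation θ A (rootFiltration θ W A') ≤ rootFiltration θ W (A ∪ A') :=
  le_iInf fun j => (rootSaturation_mono le_rfl (iInf_le _ j)).trans
    (rootSaturation_rootSaturation_le (hW j))

/-- The set of translates `x + i` with `x ∈ B` and `i ∈ I`. -/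
def intTranslates (B : Set k) (I : Set ℤ) : Set k :=
  Set.image2 (fun x (i : ℤ) => x + i) B I

lemma intTranslates_mono {I J : Set ℤ} (h : I ⊆ J) : intTranslates B I ⊆ intTranslates B J :=
  Set.image2_subset_left h

/-- An exhaustive decreasing filtration `W` by `θ`-stable subspaces that admits a Bernstein
polynomial with roots in `B`: for some `p` splitting with roots in `B`, the operator `p(θ - i)`
carries `W i` into `W (i + 1)` for every `i`. -/
structure IsBernsteinFiltration (θ : Module.End k M) (W : ℤ → Submodule k M) (B : Set k) :
    Prop where
  antitone : Antitone W
  exhaustive : ∀ u, ∃ i, u ∈ W i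
  mem_invtSubmodule : ∀ i, W i ∈ θ.invtSubmodule
  exists_bernstein : ∃ p, SplitsIn B p ∧
    ∀ i : ℤ, (W i).map (aeval (θ - (i : k) • (1 : Module.End k M)) p) ≤ W (i + 1)

namespace IsBernsteinFiltration

lemma exists_splitsIn_map_le (hW : IsBernsteinFiltration θ W B) {m j : ℤ} (h : m ≤ j) :
    ∃ P, SplitsIn (intTranslates B (Set.Ico m j)) P ∧ (W m).map (aeval θ P) ≤ W j := by
  obtain ⟨p, hp, hpW⟩ := hW.exists_bernstein
  induction j, h using Int.leInduction with
  | base => exact ⟨1, SplitsIn.one, by rw [map_one, Module.End.one_eq_id, Submodule.map_id]⟩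
  | succ j hmj ih =>
    obtain ⟨P, hP, hPW⟩ := ih
    refine ⟨p.comp (X - C (j : k)) * P, (hp.comp_X_sub_C fun x hx => ?_).mul
      (hP.mono (intTranslates_mono (Set.Ico_subset_Ico_right (by lia)))), ?_⟩
    · exact Set.mem_image2_of_mem hx ⟨hmj, by lia⟩
    · rw [map_mul, aeval_comp_X_sub_C, Module.End.mul_eq_comp, Submodule.map_comp]
      exact (Submodule.map_mono hPW).trans (hpW j)

lemma le_rootSaturation (hW : IsBernsteinFiltration θ W B) (m j : ℤ) :
    W m ≤ rootSaturation θ (intTranslates B (Set.Ico m j)) (W j) := by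
  rcases le_total m j with h | h
  · obtain ⟨P, hP, hPW⟩ := hW.exists_splitsIn_map_le h
    exact fun u hu => mem_rootSaturation_of_aeval_mem hP (hPW (Submodule.mem_map_of_mem hu))
  · calc W m ≤ W j := hW.antitone h
      _ = rootSaturation θ ∅ (W j) := rootSaturation_empty.symm
      _ ≤ _ := rootSaturation_mono (Set.empty_subset _) le_rfl

lemma le_rootFiltration (hW : IsBernsteinFiltration θ W B) (m : ℤ) :
    W m ≤ rootFiltration θ W (intTranslates B (Set.Ici m)) :=
  le_iInf fun j => (hW.le_rootSaturation m j).trans <|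
    rootSaturation_mono (intTranslates_mono Set.Ico_subset_Ici_self) le_rfl

lemma rootFiltration_intTranslates_univ (hW : IsBernsteinFiltration θ W B) :
    rootFiltration θ W (intTranslates B Set.univ) = ⊤ := by
  refine eq_top_iff.2 fun u _ => ?_
  obtain ⟨m, hm⟩ := hW.exhaustive u
  exact rootFiltration_mono (intTranslates_mono (Set.subset_univ _)) (hW.le_rootFiltration m hm)

lemma rootFiltration_le_rootFiltration (hW : IsBernsteinFiltration θ W B)
    (h : A ∩ intTranslates B Set.univ ⊆ A') : rootFiltration θ W A ≤ rootFiltration θ W A' :=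
  calc rootFiltration θ W A
      = rootFiltration θ W A ⊓ rootFiltration θ W (intTranslates B Set.univ) := by
        rw [hW.rootFiltration_intTranslates_univ, inf_top_eq]
    _ ≤ rootFiltration θ W (A ∩ intTranslates B Set.univ) :=
        rootFiltration_inf_le hW.mem_invtSubmodule
    _ ≤ rootFiltration θ W A' := rootFiltration_mono h

lemma rootFiltration_le (hW : IsBernsteinFiltration θ W B) {m : ℤ}
    (h : Disjoint A (intTranslates B (Set.Iio m))) : rootFiltration θ W A ≤ W m := by
  intro u hu
  obtain ⟨i, hi⟩ := hW.exhaustive u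
  exact rootSaturation_inf_le_of_disjoint (hW.mem_invtSubmodule m)
    (h.mono_right (intTranslates_mono Set.Ico_subset_Iio_self))
    ⟨Submodule.mem_iInf _ |>.1 hu m, hW.le_rootSaturation i m hi⟩

-- A power of `X - x` is split off a polynomial `P` carrying `W m` into `W m'`; the cofactor does
-- not vanish at `x`, so it is absorbed by the saturation.
lemma exists_map_pow_sub_smul_le (hW : IsBernsteinFiltration θ W B) (x : k) {m m' : ℤ}
    (hm : rootFiltration θ W A ≤ W m) (hm' : W m' ≤ rootFiltration θ W (A \ {x})) :
    ∃ n : ℕ, (rootFiltration θ W A).map ((θ - x • (1 : Module.End k M)) ^ n) ≤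
      rootFiltration θ W (A \ {x}) := by
  obtain ⟨P, hP, hPW⟩ := hW.exists_splitsIn_map_le (le_max_left m m')
  obtain ⟨h, hPh, hxh⟩ := exists_eq_pow_rootMultiplicity_mul_and_not_dvd P hP.1 x
  have hh : SplitsIn {x}ᶜ h := by
    have hdvd := hP.of_dvd (Dvd.intro_left _ hPh.symm)
    exact ⟨hdvd.1, hdvd.2.1, fun y hy hyx => hxh (dvd_iff_isRoot.2 (hyx ▸ hy))⟩
  refine ⟨rootMultiplicity x P, ?_⟩
  rintro _ ⟨u, hu, rfl⟩
  set v := ((θ - x • (1 : Module.End k M)) ^ rootMultiplicity x P) u with hv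
  have hvX : v = aeval θ ((X - C x) ^ rootMultiplicity x P) u := by
    rw [hv, map_pow, map_sub, aeval_X, aeval_C, Algebra.algebraMap_eq_smul_one]
  have hvA : v ∈ rootFiltration θ W A :=
    hvX ▸ aeval_apply_mem (rootFiltration_mem_invtSubmodule hW.mem_invtSubmodule) _ hu
  have hhv : aeval θ h v ∈ rootFiltration θ W (A \ {x}) := by
    rw [hvX, ← Module.End.mul_apply, ← map_mul, mul_comm, ← hPh]
    exact hm' (hW.antitone (le_max_right m m') (hPW (Submodule.mem_map_of_mem (hm hu))))
  have hvx : v ∈ rootFiltration θ W ({x}ᶜ ∪ A \ {x}) :=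
    rootSaturation_rootFiltration_le hW.mem_invtSubmodule (mem_rootSaturation_of_aeval_mem hh hhv)
  refine rootFiltration_mono ?_ (rootFiltration_inf_le hW.mem_invtSubmodule ⟨hvA, hvx⟩)
  rintro y ⟨hyA, hy | hy⟩
  exacts [⟨hyA, hy⟩, hy]

end IsBernsteinFiltration

end RootFiltration

section VFiltration

variable {k : Type*} [Field k] {M : Type*} [AddCommGroup M] [Module k M]
  {θ : Module.End k M} {W : ℤ → Submodule k M} {R : Set ℚ}

/-- The fractions with denominator `ℓ`, among which the jumps of a discrete filtration lie. -/
def rationalGrid (ℓ : ℕ) : Set ℚ :=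
  Set.range fun z : ℤ => (z : ℚ) / ℓ

lemma succ_div_le_of_mem_rationalGrid {ℓ : ℕ} {r : ℚ} (hr : r ∈ rationalGrid ℓ) {i : ℤ}
    (h : (i : ℚ) / ℓ < r) : (i + 1 : ℚ) / ℓ ≤ r := by
  obtain ⟨z, rfl⟩ := hr
  have hiz : i + 1 ≤ z := by
    by_contra! hz
    exact h.not_ge (div_le_div_of_nonneg_right (mod_cast (by lia : z ≤ i)) ℓ.cast_nonneg)
  exact div_le_div_of_nonneg_right (mod_cast hiz) ℓ.cast_nonneg

/-- The filtration `V^α` attached to a `θ`-stable filtration `W`: the vectors which, modulo every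
step of `W`, only involve rational generalized eigenvalues of `θ` at least `α`. -/
noncomputable def vFiltration (θ : Module.End k M) (W : ℤ → Submodule k M) (α : ℚ) :
    Submodule k M :=
  rootFiltration θ W ((↑) '' Set.Ici α)

lemma antitone_vFiltration : Antitone (vFiltration θ W) :=
  fun _ _ h => rootFiltration_mono (Set.image_mono (Set.Ici_subset_Ici.2 h))

variable [CharZero k]

lemma exists_intTranslates_subset_rationalGrid (hR : R.Finite) :
    ∃ ℓ : ℕ, 0 < ℓ ∧ intTranslates ((↑) '' R : Set k) Set.univ ⊆ (↑) '' rationalGrid ℓ := by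
  refine ⟨∏ q ∈ hR.toFinset, q.den, Finset.prod_pos fun q _ => q.den_pos, ?_⟩
  rintro _ ⟨_, ⟨q, hq, rfl⟩, i, -, rfl⟩
  set ℓ := ∏ q ∈ hR.toFinset, q.den
  have hℓ : (ℓ : ℚ) ≠ 0 := by simp [ℓ, Finset.prod_eq_zero_iff]
  obtain ⟨e, he⟩ : q.den ∣ ℓ := Finset.dvd_prod_of_mem Rat.den (hR.mem_toFinset.2 hq)
  have hqℓ : q * ℓ = q.num * e := by rw [he, Nat.cast_mul, ← mul_assoc, Rat.mul_den_eq_num]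
  refine ⟨q + i, ⟨q.num * e + i * ℓ, ?_⟩, by push_cast; rfl⟩
  rw [div_eq_iff hℓ, add_mul, hqℓ]
  push_cast
  rfl

lemma map_vFiltration_le (n : ℤ) {a : Module.End k M}
    (ha : SemiconjBy a θ (θ - (n : k) • (1 : Module.End k M)))
    (haW : ∀ j, (W j).map a ≤ W (j + n)) (α : ℚ) :
    (vFiltration θ W α).map a ≤ vFiltration θ W (α + n) := by
  refine map_rootFiltration_le n ha haW ?_
  rintro _ ⟨q, hq, rfl⟩
  exact ⟨q + n, add_le_add_left (Set.mem_Ici.1 hq) _, by push_cast; rfl⟩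

namespace IsBernsteinFiltration

lemma le_vFiltration (hW : IsBernsteinFiltration θ W ((↑) '' R)) {r : ℚ}
    (hr : r ∈ lowerBounds R) (m : ℤ) : W m ≤ vFiltration θ W (r + m) := by
  refine (hW.le_rootFiltration m).trans (rootFiltration_mono ?_)
  rintro _ ⟨_, ⟨q, hq, rfl⟩, i, hi, rfl⟩
  have hmi : (m : ℚ) ≤ i := mod_cast hi
  exact ⟨q + i, add_le_add (hr hq) hmi, by push_cast; rfl⟩

lemma vFiltration_le (hW : IsBernsteinFiltration θ W ((↑) '' R)) {r : ℚ}
    (hr : ∀ q ∈ R, q < r + 1) (m : ℤ) : vFiltration θ W (r + m) ≤ W m := by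
  refine hW.rootFiltration_le (Set.disjoint_left.2 ?_)
  rintro _ ⟨s, hs, rfl⟩ ⟨_, ⟨q, hq, rfl⟩, i, hi, hsi⟩
  have hsq : q + i = s := Rat.cast_injective (α := k) (by push_cast; exact hsi)
  have him : (i : ℚ) + 1 ≤ m := mod_cast Set.mem_Iio.1 hi
  linarith [hr q hq, Set.mem_Ici.1 hs]

lemma exists_le_vFiltration (hW : IsBernsteinFiltration θ W ((↑) '' R)) (hR : BddBelow R)
    (α : ℚ) : ∃ m, W m ≤ vFiltration θ W α := by
  obtain ⟨r, hr⟩ := hR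
  exact ⟨⌈α - r⌉, (hW.le_vFiltration hr _).trans <|
    antitone_vFiltration (sub_le_iff_le_add'.1 (Int.le_ceil _))⟩

lemma exists_vFiltration_le (hW : IsBernsteinFiltration θ W ((↑) '' R)) (hR : BddAbove R)
    (α : ℚ) : ∃ m, vFiltration θ W α ≤ W m := by
  obtain ⟨r, hr⟩ := hR
  refine ⟨⌊α - r⌋, le_trans (antitone_vFiltration ?_) <|
    hW.vFiltration_le (fun q hq => (hr hq).trans_lt (lt_add_one r)) _⟩
  exact le_sub_iff_add_le'.1 (Int.floor_le _)

lemma vFiltration_intCast (hW : IsBernsteinFiltration θ W ((↑) '' Set.Ico (0 : ℚ) 1)) (i : ℤ) :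
    vFiltration θ W i = W i := by
  refine le_antisymm ?_ ?_
  · simpa using hW.vFiltration_le (r := 0) (fun q hq => by simpa using hq.2) i
  · simpa using hW.le_vFiltration (r := 0) (fun q hq => hq.1) i

lemma rootFiltration_le_vFiltration (hW : IsBernsteinFiltration θ W ((↑) '' R)) {ℓ : ℕ}
    (hℓ : intTranslates ((↑) '' R : Set k) Set.univ ⊆ (↑) '' rationalGrid ℓ) {A : Set ℚ} {i : ℤ}
    {β : ℚ} (hA : ∀ r ∈ A, (i : ℚ) / ℓ < r) (hβ : β ≤ (i + 1 : ℚ) / ℓ) :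
    rootFiltration θ W ((↑) '' A) ≤ vFiltration θ W β := by
  refine hW.rootFiltration_le_rootFiltration ?_
  rintro _ ⟨⟨r, hr, rfl⟩, hx⟩
  obtain ⟨s, hs, hsr⟩ := hℓ hx
  obtain rfl : s = r := Rat.cast_injective hsr
  exact ⟨s, hβ.trans (succ_div_le_of_mem_rationalGrid hs (hA s hr)), rfl⟩

lemma exists_vFiltration_eq_of_mem_Ioc (hW : IsBernsteinFiltration θ W ((↑) '' R))
    (hR : R.Finite) : ∃ ℓ : ℕ, 0 < ℓ ∧ ∀ (i : ℤ) (α β : ℚ),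
      α ∈ Set.Ioc ((i : ℚ) / ℓ) ((i + 1 : ℚ) / ℓ) →
      β ∈ Set.Ioc ((i : ℚ) / ℓ) ((i + 1 : ℚ) / ℓ) → vFiltration θ W α = vFiltration θ W β := by
  obtain ⟨ℓ, hℓ, hgrid⟩ := exists_intTranslates_subset_rationalGrid (k := k) hR
  have hle {i : ℤ} {α β : ℚ} (hα : (i : ℚ) / ℓ < α) (hβ : β ≤ (i + 1 : ℚ) / ℓ) :
      vFiltration θ W α ≤ vFiltration θ W β :=
    hW.rootFiltration_le_vFiltration hgrid (fun _ hr => hα.trans_le hr) hβ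
  exact ⟨ℓ, hℓ, fun i α β hα hβ => (hle hα.1 hβ.2).antisymm (hle hβ.1 hα.2)⟩

lemma rootFiltration_Ioi_le_gt (hW : IsBernsteinFiltration θ W ((↑) '' R)) (hR : R.Finite)
    (α : ℚ) : rootFiltration θ W ((↑) '' Set.Ioi α) ≤ gt (vFiltration θ W) α := by
  obtain ⟨ℓ, hℓ, hgrid⟩ := exists_intTranslates_subset_rationalGrid (k := k) hR
  have hℓ' : (0 : ℚ) < ℓ := mod_cast hℓ
  have hα : (⌊α * ℓ⌋ : ℚ) / ℓ ≤ α := (div_le_iff₀ hℓ').2 (Int.floor_le _)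
  have hα' : α < (⌊α * ℓ⌋ + 1 : ℚ) / ℓ := (lt_div_iff₀ hℓ').2 (Int.lt_floor_add_one _)
  exact (hW.rootFiltration_le_vFiltration hgrid (fun _ hr => hα.trans_lt hr) le_rfl).trans
    (le_iSup₂_of_le _ hα' le_rfl)

lemma exists_map_pow_vFiltration_le_gt (hW : IsBernsteinFiltration θ W ((↑) '' R))
    (hR : R.Finite) (α : ℚ) : ∃ n : ℕ,
      (vFiltration θ W α).map ((θ - (α : k) • (1 : Module.End k M)) ^ n) ≤
        gt (vFiltration θ W) α := by
  have hdiff : ((↑) '' Set.Ici α \ {(α : k)} : Set k) = (↑) '' Set.Ioi α := by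
    rw [← Set.image_singleton, ← Set.image_sdiff Rat.cast_injective, Set.Ici_sdiff_left]
  obtain ⟨m, hm⟩ := hW.exists_vFiltration_le hR.bddAbove α
  obtain ⟨m', hm'⟩ := hW.exists_le_vFiltration hR.bddBelow (α + 1)
  have hIoi : vFiltration θ W (α + 1) ≤ rootFiltration θ W ((↑) '' Set.Ici α \ {(α : k)}) := by
    rw [hdiff]
    exact rootFiltration_mono (Set.image_mono (Set.Ici_subset_Ioi.2 (lt_add_one α)))
  obtain ⟨n, hn⟩ := hW.exists_map_pow_sub_smul_le (α : k) hm (hm'.trans hIoi)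
  exact ⟨n, hn.trans (hdiff ▸ hW.rootFiltration_Ioi_le_gt hR α)⟩

end IsBernsteinFiltration

end VFiltration

section StableSubmodule

variable {k : Type*} [CommRing k] {M : Type*} [AddCommGroup M] [Module k M]
  {A : Subalgebra k (Module.End k M)}

lemma map_le_of_mem_adjoin {s : Set (Module.End k M)} {N : Submodule k M}
    (hs : ∀ a ∈ s, N.map a ≤ N) {a : Module.End k M} (ha : a ∈ Algebra.adjoin k s) :
    N.map a ≤ N := by
  induction ha using Algebra.adjoin_induction with
  | mem a ha => exact hs a ha
  | algebraMap r =>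
    rintro _ ⟨u, hu, rfl⟩
    exact N.smul_mem r hu
  | add a b _ _ ha hb =>
    exact (Submodule.map_add_le N a b).trans (sup_le ha hb)
  | mul a b _ _ ha hb =>
    rw [Module.End.mul_eq_comp, Submodule.map_comp]
    exact (Submodule.map_mono hb).trans ha

/-- An `A`-stable subspace regarded as an `A`-submodule, so that the library's notion of finite
generation applies to it. -/
def stableSubmodule (N : Submodule k M) (hN : ∀ a ∈ A, N.map a ≤ N) : Submodule A M where
  __ := N.toAddSubmonoid
  smul_mem' a _ hu := hN a a.2 (Submodule.mem_map_of_mem hu)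

lemma stableSubmodule_fg_iff {N : Submodule k M} (hN : ∀ a ∈ A, N.map a ≤ N) :
    (stableSubmodule N hN).FG ↔ ∃ F : Finset M, (F : Set M) ⊆ N ∧
      ∀ U : Submodule k M, (∀ a ∈ A, U.map a ≤ U) → (F : Set M) ⊆ U → N ≤ U := by
  refine exists_congr fun F => ⟨fun hF => ⟨?_, fun U hU hFU => ?_⟩, fun ⟨hFN, hF⟩ => ?_⟩
  · exact fun u hu => hF.le (Submodule.subset_span hu)
  · have hle : stableSubmodule N hN ≤ stableSubmodule U hU := hF ▸ Submodule.span_le.2 hFU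
    exact hle
  · refine le_antisymm (Submodule.span_le.2 hFN) ?_
    refine hF ((Submodule.span A (F : Set M)).restrictScalars k) ?_ Submodule.subset_span
    rintro a ha _ ⟨u, hu, rfl⟩
    exact (Submodule.span A (F : Set M)).smul_mem ⟨a, ha⟩ hu

end StableSubmodule

section Weyl

variable {R : Type*} [Ring R] {x y : R}

lemma semiconjBy_mul_sub_one (h : y * x - x * y = 1) : SemiconjBy x (y * x) (y * x - 1) := by
  rw [← h, sub_sub_cancel, SemiconjBy, mul_assoc]

lemma semiconjBy_mul_add_one (h : y * x - x * y = 1) : SemiconjBy y (y * x) (y * x + 1) := by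
  have hyx : y * x = x * y + 1 := sub_eq_iff_eq_add'.1 h
  rw [SemiconjBy, add_mul, one_mul, mul_assoc y x y, ← mul_add_one, ← hyx]

end Weyl

lemma mul_mem_A0 {k : Type*} [Field k] {M : Type*} [AddCommGroup M] [Module k M]
    {T D : Module.End k M} {C : Set (Module.End k M)} : D * T ∈ A0 T D C := by
  have hS : -(D * T) ∈ A0 T D C := Algebra.subset_adjoin (by simp)
  simpa using neg_mem hS

end VFilt

open VFilt

namespace IsPreVFiltration

variable {k : Type*} [Field k] [CharZero k] {M : Type*} [AddCommGroup M] [Module k M]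
  {T D : Module.End k M} {C : Set (Module.End k M)} {W : ℤ → Submodule k M} {p : k[X]}

lemma exists_finite_splitsIn (hW : IsPreVFiltration T D C W p) :
    ∃ R : Set ℚ, R.Finite ∧ SplitsIn ((↑) '' R) p := by
  obtain ⟨c, L, hp⟩ := hW.p_factors
  have hc : c ≠ 0 := fun h => hW.p_ne (by rw [hp, h, Polynomial.C_0, zero_mul])
  refine ⟨{q | q ∈ L}, L.finite_toSet, hW.p_ne, ?_, fun x hx => ?_⟩
  · rw [hp]
    refine (Splits.C c).mul (Splits.multisetProd fun f hf => ?_)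
    obtain ⟨q, -, rfl⟩ := Multiset.mem_map.1 hf
    exact Splits.X_sub_C _
  · have hroots : p.roots = L.map (↑) := by
      have hp' : p = Polynomial.C c * ((L.map (↑)).map fun y : k => X - Polynomial.C y).prod := by
        rw [hp, Multiset.map_map]
        rfl
      rw [hp', roots_C_mul _ hc, roots_multiset_prod_X_sub_C]
    have hxL : x ∈ L.map ((↑) : ℚ → k) := hroots ▸ (mem_roots hW.p_ne).2 hx
    exact Multiset.mem_map.1 hxL

lemma isBernsteinFiltration (hW : IsPreVFiltration T D C W p) {B : Set k} (hp : SplitsIn B p) :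
    IsBernsteinFiltration (D * T) W B where
  antitone := hW.antitone
  exhaustive := hW.exhaustive
  mem_invtSubmodule i := (Module.End.mem_invtSubmodule_iff_map_le _).2 (hW.stable _ mul_mem_A0 i)
  exists_bernstein := ⟨p, hp, hW.p_spec⟩

lemma map_T_vFiltration_le (hweyl : D * T - T * D = 1) (hW : IsPreVFiltration T D C W p)
    (α : ℚ) : (vFiltration (D * T) W α).map T ≤ vFiltration (D * T) W (α + 1) := by
  simpa using map_vFiltration_le 1 (by simpa using semiconjBy_mul_sub_one hweyl) hW.mapT_le α

lemma map_D_vFiltration_le (hweyl : D * T - T * D = 1) (hW : IsPreVFiltration T D C W p)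
    (α : ℚ) : (vFiltration (D * T) W α).map D ≤ vFiltration (D * T) W (α - 1) := by
  simpa [sub_eq_add_neg] using map_vFiltration_le (-1)
    (by simpa using semiconjBy_mul_add_one hweyl) hW.mapD_le α

lemma map_vFiltration_le_of_mem_A0 (hweyl : D * T - T * D = 1)
    (hC : ∀ c ∈ C, Commute c (D * T)) (hW : IsPreVFiltration T D C W p)
    {a : Module.End k M} (ha : a ∈ A0 T D C) (α : ℚ) :
    (vFiltration (D * T) W α).map a ≤ vFiltration (D * T) W α := by
  refine map_le_of_mem_adjoin (fun b hb => ?_) ha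
  have hbW := hW.stable b (Algebra.subset_adjoin hb)
  rcases hb with (rfl | rfl) | hb
  · exact (hW.map_T_vFiltration_le hweyl α).trans (antitone_vFiltration (by simp))
  · exact map_rootFiltration_le_of_commute (Commute.refl _).neg_left hbW
  · exact map_rootFiltration_le_of_commute (hC b hb) hbW

theorem isWeakVFiltration_vFiltration (hweyl : D * T - T * D = 1)
    (hC : ∀ c ∈ C, Commute c (D * T)) (hW : IsPreVFiltration T D C W p) :
    IsWeakVFiltration T D C (vFiltration (D * T) W) := by
  obtain ⟨R, hR, hp⟩ := hW.exists_finite_splitsIn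
  have hB := hW.isBernsteinFiltration hp
  refine ⟨antitone_vFiltration, fun u => ?_, hB.exists_vFiltration_eq_of_mem_Ioc hR,
    fun a ha => hW.map_vFiltration_le_of_mem_A0 hweyl hC ha, hW.map_T_vFiltration_le hweyl,
    hW.map_D_vFiltration_le hweyl, fun α => ?_⟩
  · obtain ⟨r, hr⟩ := hR.bddBelow
    obtain ⟨i, hi⟩ := hW.exhaustive u
    exact ⟨r + i, hB.le_vFiltration hr i hi⟩
  · obtain ⟨n, hn⟩ := hB.exists_map_pow_vFiltration_le_gt hR α
    refine ⟨n + 1, by lia, fun u hu => ?_⟩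
    have hθu : (D * T - (α : k) • (1 : Module.End k M)) u ∈ vFiltration (D * T) W α :=
      sub_mem (rootFiltration_mem_invtSubmodule hB.mem_invtSubmodule hu)
        (Submodule.smul_mem _ _ hu)
    have hpow := hn (Submodule.mem_map_of_mem hθu)
    rw [← Module.End.mul_apply, ← pow_succ] at hpow
    rw [neg_add_eq_sub, ← neg_sub, neg_pow]
    rcases neg_one_pow_eq_or (Module.End k M) (n + 1) with h | h
    · rwa [h, one_mul]
    · rw [h, neg_one_mul]
      exact neg_mem hpow

theorem fg_vFiltration [IsNoetherianRing (A0 T D C)] (hweyl : D * T - T * D = 1)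
    (hC : ∀ c ∈ C, Commute c (D * T)) (hW : IsPreVFiltration T D C W p) (α : ℚ) :
    ∃ F : Finset M, (F : Set M) ⊆ vFiltration (D * T) W α ∧
      ∀ U : Submodule k M, (∀ a ∈ A0 T D C, U.map a ≤ U) → (F : Set M) ⊆ U →
        vFiltration (D * T) W α ≤ U := by
  obtain ⟨R, hR, hp⟩ := hW.exists_finite_splitsIn
  obtain ⟨m, hm⟩ := (hW.isBernsteinFiltration hp).exists_vFiltration_le hR.bddAbove α
  have hWm : (stableSubmodule (W m) fun a ha => hW.stable a ha m).FG :=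
    (stableSubmodule_fg_iff _).2 (hW.fg m)
  exact (stableSubmodule_fg_iff fun a ha => hW.map_vFiltration_le_of_mem_A0 hweyl hC ha α).1
    (hWm.of_le hm)

theorem map_T_vFiltration_eq (hweyl : D * T - T * D = 1) (hW : IsPreVFiltration T D C W p)
    {α : ℚ} (hα : 0 < α) :
    (vFiltration (D * T) W α).map T = vFiltration (D * T) W (α + 1) := by
  refine (hW.map_T_vFiltration_le hweyl α).antisymm fun u hu => ?_
  obtain ⟨R, hR, hp⟩ := hW.exists_finite_splitsIn
  have hB := hW.isBernsteinFiltration hp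
  set N := (vFiltration (D * T) W α).map T
  have hDT : D * T - 1 = T * D := by rw [← hweyl, sub_sub_cancel]
  have hN : N ∈ (D * T).invtSubmodule := by
    rintro _ ⟨v, hv, rfl⟩
    have hθv : (D * T) v ∈ vFiltration (D * T) W α :=
      rootFiltration_mem_invtSubmodule hB.mem_invtSubmodule hv
    refine ⟨(D * T) v + v, add_mem hθv hv, ?_⟩
    have hv' := LinearMap.congr_fun hweyl (T v)
    simp only [LinearMap.sub_apply, Module.End.mul_apply, Module.End.one_apply] at hv'
    rw [map_add, Module.End.mul_apply, Module.End.mul_apply]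
    exact (sub_eq_iff_eq_add'.1 hv').symm
  obtain ⟨j, hj⟩ : ∃ j, W j ≤ N := by
    obtain ⟨i₀, hi₀⟩ := hW.eventually
    obtain ⟨m, hm⟩ := hB.exists_le_vFiltration hR.bddBelow α
    refine ⟨max i₀ m + 1, ?_⟩
    rw [hi₀ _ (le_max_left i₀ m)]
    exact Submodule.map_mono ((hW.antitone (le_max_right i₀ m)).trans hm)
  have hu_ge : u ∈ rootSaturation (D * T) ((↑) '' Set.Ici (α + 1)) N :=
    rootSaturation_mono le_rfl hj ((Submodule.mem_iInf _).1 hu j)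
  have hu_one : u ∈ rootSaturation (D * T) {1} N := by
    refine mem_rootSaturation_of_aeval_mem (SplitsIn.X_sub_C 1) ?_
    have hDu : D u ∈ vFiltration (D * T) W α := by
      simpa using hW.map_D_vFiltration_le hweyl _ (Submodule.mem_map_of_mem hu)
    rw [map_sub, aeval_X, aeval_C, map_one, hDT]
    exact Submodule.mem_map_of_mem hDu
  refine rootSaturation_inf_le_of_disjoint hN ?_ ⟨hu_ge, hu_one⟩
  rw [Set.disjoint_singleton_right]
  rintro ⟨q, hq, hq1⟩
  have : q = 1 := mod_cast hq1
  linarith [Set.mem_Ici.1 hq]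

theorem isVFiltration_vFiltration [IsNoetherianRing (A0 T D C)] (hweyl : D * T - T * D = 1)
    (hC : ∀ c ∈ C, Commute c (D * T)) (hW : IsPreVFiltration T D C W p) :
    IsVFiltration T D C (vFiltration (D * T) W) where
  toIsWeakVFiltration := hW.isWeakVFiltration_vFiltration hweyl hC
  fg := hW.fg_vFiltration hweyl hC
  mapT_eq _ := hW.map_T_vFiltration_eq hweyl

end IsPreVFiltration

theorem stmt12_general {k : Type*} [Field k] [CharZero k]
    {M : Type*} [AddCommGroup M] [Module k M]
    (T D : Module.End k M) (C : Set (Module.End k M))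
    (hweyl : D * T - T * D = 1)
    (hC : ∀ c ∈ C, Commute c (D * T))
    (hNoeth : IsNoetherianRing ↥(VFilt.A0 T D C))
    (W : ℤ → Submodule k M) (p : Polynomial k)
    (hW : IsPreVFiltration T D C W p) :
    ∃ V : ℚ → Submodule k M, IsVFiltration T D C V ∧
      ((∀ x : k, p.IsRoot x → ∃ q : ℚ, (q : k) = x ∧ 0 ≤ q ∧ q < 1) →
        ∀ i : ℤ, V (i : ℚ) = W i) := by
  refine ⟨vFiltration (D * T) W, hW.isVFiltration_vFiltration hweyl hC, fun hroots => ?_⟩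
  obtain ⟨_, -, hp⟩ := hW.exists_finite_splitsIn
  have hp' : SplitsIn ((↑) '' Set.Ico (0 : ℚ) 1) p := by
    refine ⟨hp.1, hp.2.1, fun x hx => ?_⟩
    obtain ⟨q, hqx, hq⟩ := hroots x hx
    exact ⟨q, hq, hqx⟩
  exact (hW.isBernsteinFiltration hp').vFiltration_intCast

/-- **Proposition 4.5(ii)+(iii).** If `A0` is left Noetherian and `M` admits a
pre-`V`-filtration `W` with polynomial `p`, then `M` admits a `V`-filtration; moreover, if
all roots of `p` lie in `[0,1)`, this `V`-filtration satisfies `V^i = W^i` for `i ∈ ℤ`. -/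
theorem stmt12 {k : Type*} [Field k] [CharZero k]
    {M : Type*} [AddCommGroup M] [Module k M]
    (T D : Module.End k M) (C : Set (Module.End k M))
    (hweyl : D * T - T * D = 1)
    (hC : ∀ c ∈ C, Commute c T ∧ Commute c D)
    (hNoeth : IsNoetherianRing ↥(VFilt.A0 T D C))
    (W : ℤ → Submodule k M) (p : Polynomial k)
    (hW : IsPreVFiltration T D C W p) :
    ∃ V : ℚ → Submodule k M, IsVFiltration T D C V ∧
      ((∀ x : k, p.IsRoot x → ∃ q : ℚ, (q : k) = x ∧ 0 ≤ q ∧ q < 1) →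
        ∀ i : ℤ, V (i : ℚ) = W i) := by
  exact stmt12_general T D C hweyl (fun c hc => (hC c hc).2.mul_right (hC c hc).1) hNoeth W p hW
end

section
/- Assume that A0 is a left Noetherian ring and that M admits a V-filtration (V^α)_{α∈ℚ}. Then for every w ∈ M the ideal I_w ⊆ k[x] is nonzero; moreover, if w ∈ V^α, then the monic generator b_w of I_w factors over ℚ as a product of linear factors, and every root γ of b_w is a rational number satisfying γ ≤ −α and V^{−γ} ≠ V^{>−γ}. -/
open Module

/-- The ideal `I_w = {b ∈ k[x] : b(S)(w) ∈ A0·(T w)}` attached to `w ∈ M`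
(abstracting the condition `b(s)·w ∈ V^1 D_{X×A¹}·w` defining the `b`-function of `w`). -/
def VFilt.bSet {k : Type*} [Field k] [CharZero k]
    {M : Type*} [AddCommGroup M] [Module k M]
    (T D : Module.End k M) (C : Set (Module.End k M)) (w : M) : Set (Polynomial k) :=
  {b : Polynomial k | ∃ a ∈ VFilt.A0 T D C, (Polynomial.aeval (-(D * T)) b) w = a (T w)}

/-!
The operators `S + α` push `w` up the filtration: if `w ∈ V^α`, then for every `β` some product of
factors `x - γ`, with `-γ ≥ α` a jump of the filtration, sends `w` into `V^β`. On the other hand, an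
Artin–Rees argument with the chain `{u ∈ V^1 : T^n u ∈ A0 w}` in the Noetherian module `V^1` shows
`A0 w ∩ V^β ⊆ T (A0 w)` for some `β`, and `T (A0 w) ⊆ A0 (T w)` because `T A0 ⊆ A0 T`. So that
product lies in `I_w`, and `b_w` divides it.
-/

section LinearFactors

open Polynomial

lemma exists_le_map_eq_of_le_map {ι α : Type*} {f : ι → α} {s : Multiset ι} {t : Multiset α}
    (h : t ≤ s.map f) : ∃ u ≤ s, u.map f = t := by
  induction s, t using Quotient.inductionOn₂ with
  | h l m =>
    obtain ⟨m', hm', hsub⟩ := h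
    obtain ⟨l', hl', rfl⟩ := List.sublist_map_iff.1 hsub
    exact ⟨l', Multiset.coe_le.2 hl'.subperm, Multiset.coe_eq_coe.2 hm'⟩

lemma exists_le_eq_prod_X_sub_C_of_monic_of_dvd {R ι : Type*} [CommRing R] [IsDomain R]
    {f : ι → R} {s : Multiset ι} {p : R[X]} (hp : p.Monic)
    (hdvd : p ∣ (s.map fun i ↦ X - C (f i)).prod) :
    ∃ t ≤ s, p = (t.map fun i ↦ X - C (f i)).prod := by
  have hprod : ∀ t : Multiset ι,
      (t.map fun i ↦ X - C (f i)).prod = ((t.map f).map fun a ↦ X - C a).prod := fun t ↦ by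
    rw [Multiset.map_map, Function.comp_def]
  simp only [hprod] at hdvd ⊢
  have hne : ((s.map f).map fun a ↦ X - C a).prod ≠ 0 :=
    (monic_multisetProd_X_sub_C _).ne_zero
  have hroots : p.roots ≤ s.map f := by
    simpa only [roots_multiset_prod_X_sub_C] using roots.le_of_dvd hne hdvd
  obtain ⟨t, hts, ht⟩ := exists_le_map_eq_of_le_map hroots
  have hsplits : p.Splits := by
    refine Splits.of_dvd (Splits.multisetProd ?_) hne hdvd
    simp only [Multiset.forall_mem_map_iff]
    exact fun a _ ↦ Splits.X_sub_C _
  exact ⟨t, hts, ht ▸ hsplits.eq_prod_roots_of_monic hp⟩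

lemma exists_monic_eq_span_singleton {K : Type*} [Field K] {I : Ideal K[X]} (hI : I ≠ ⊥) :
    ∃ p : K[X], p.Monic ∧ I = Ideal.span {p} := by
  classical
  obtain ⟨g, rfl⟩ := (IsPrincipalIdealRing.principal I).principal
  have hg : g ≠ 0 := by simpa using hI
  exact ⟨normalize g, monic_normalize hg,
    Ideal.span_singleton_eq_span_singleton.2 (associated_normalize g)⟩

lemma exists_le_eq_span_prod_X_sub_C {K ι : Type*} [Field K] {f : ι → K} {I : Ideal K[X]}
    {s : Multiset ι} (hs : (s.map fun i ↦ X - C (f i)).prod ∈ I) :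
    ∃ t ≤ s, I = Ideal.span {(t.map fun i ↦ X - C (f i)).prod} := by
  have hne : (s.map fun i ↦ X - C (f i)).prod ≠ 0 :=
    (monic_multiset_prod_of_monic _ _ fun i _ ↦ monic_X_sub_C (f i)).ne_zero
  obtain ⟨p, hp, rfl⟩ :=
    exists_monic_eq_span_singleton (I := I) (by rintro rfl; exact hne hs)
  obtain ⟨t, hts, rfl⟩ := exists_le_eq_prod_X_sub_C_of_monic_of_dvd hp
    (Ideal.mem_span_singleton.1 hs)
  exact ⟨t, hts, rfl⟩

end LinearFactors

section ArtinRees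

variable {R M : Type*} [Semiring R] [AddCommMonoid M] [Module R M]

/-- The preimage of an `R`-submodule under an additive map `T` that need not be `R`-linear, but
satisfies `T r ∈ R T` for every scalar `r`. Its iterates are the submodules `{x | T^n x ∈ P}`. -/
def twistedComap (T : M →+ M) (hT : ∀ r : R, ∃ r' : R, ∀ x, T (r • x) = r' • T x)
    (P : Submodule R M) : Submodule R M where
  toAddSubmonoid := P.toAddSubmonoid.comap T
  smul_mem' r x hx := by
    obtain ⟨r', hr'⟩ := hT r
    have : T (r • x) ∈ P := hr' x ▸ P.smul_mem r' hx
    exact this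

lemma mem_twistedComap {T : M →+ M} {hT : ∀ r : R, ∃ r' : R, ∀ x, T (r • x) = r' • T x}
    {P : Submodule R M} {x : M} : x ∈ twistedComap T hT P ↔ T x ∈ P :=
  Iff.rfl

theorem exists_forall_iterate_mem_of_iterate_succ_mem (T : M →+ M)
    (hT : ∀ r : R, ∃ r' : R, ∀ x, T (r • x) = r' • T x) (N P : Submodule R M)
    [IsNoetherian R N] (hP : ∀ x ∈ P, T x ∈ P) :
    ∃ n : ℕ, ∀ x ∈ N, T^[n + 1] x ∈ P → T^[n] x ∈ P := by
  let Q : ℕ → Submodule R M := fun n ↦ (twistedComap T hT)^[n] P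
  have mem_Q (n : ℕ) (x : M) : x ∈ Q n ↔ T^[n] x ∈ P := by
    induction n generalizing x with
    | zero => rfl
    | succ n ih =>
      have mem_Q_succ : x ∈ Q (n + 1) ↔ T x ∈ Q n := by
        simp only [Q, Function.iterate_succ_apply', mem_twistedComap]
      rw [mem_Q_succ, ih, Function.iterate_succ_apply]
  have Q_mono : Monotone Q := monotone_nat_of_le_succ fun n x hx ↦ by
    rw [mem_Q] at hx ⊢
    exact Function.iterate_succ_apply' T n x ▸ hP _ hx
  obtain ⟨n, hn⟩ := monotone_stabilizes_iff_noetherian.2 ‹IsNoetherian R N›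
    ⟨fun n ↦ (Q n).submoduleOf N, fun _ _ h ↦ Submodule.comap_mono (Q_mono h)⟩
  refine ⟨n, fun x hx hTx ↦ ?_⟩
  have hxn : (⟨x, hx⟩ : N) ∈ (Q (n + 1)).submoduleOf N := (mem_Q _ _).2 hTx
  exact (mem_Q _ _).1 ((hn (n + 1) n.le_succ).ge hxn)

end ArtinRees

section Normalizer

variable {R A : Type*} [CommSemiring R] [Semiring A] [Algebra R A]

lemma exists_semiconjBy_of_mem_adjoin {s : Set A} {t : A}
    (hs : ∀ x ∈ s, ∃ x' ∈ Algebra.adjoin R s, SemiconjBy t x x') {a : A}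
    (ha : a ∈ Algebra.adjoin R s) : ∃ a' ∈ Algebra.adjoin R s, SemiconjBy t a a' := by
  induction ha using Algebra.adjoin_induction with
  | mem x hx => exact hs x hx
  | algebraMap r => exact ⟨_, Subalgebra.algebraMap_mem _ r, (Algebra.commutes r t).symm⟩
  | add x y _ _ ihx ihy =>
    obtain ⟨x', hx', hxx'⟩ := ihx
    obtain ⟨y', hy', hyy'⟩ := ihy
    exact ⟨x' + y', add_mem hx' hy', hxx'.add_right hyy'⟩
  | mul x y _ _ ihx ihy =>
    obtain ⟨x', hx', hxx'⟩ := ihx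
    obtain ⟨y', hy', hyy'⟩ := ihy
    exact ⟨x' * y', mul_mem hx' hy', hxx'.mul_right hyy'⟩

end Normalizer

section VFiltrationLemmas

open Polynomial

variable {k : Type*} [Field k] {M : Type*} [AddCommGroup M] [Module k M]
variable {T D : Module.End k M} {C : Set (Module.End k M)} {V : ℚ → Submodule k M}

namespace VFilt

lemma T_mem_A0 : T ∈ A0 T D C :=
  Algebra.subset_adjoin (by simp)

lemma S_mem_A0 : -(D * T) ∈ A0 T D C :=
  Algebra.subset_adjoin (by simp)

lemma aeval_mem_A0 (b : k[X]) : aeval (-(D * T)) b ∈ A0 T D C :=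
  Algebra.adjoin_le (Set.singleton_subset_iff.2 S_mem_A0) (aeval_mem_adjoin_singleton k _)

lemma exists_semiconjBy_of_mem_A0 (hweyl : D * T - T * D = 1) (hC : ∀ c ∈ C, Commute c T) :
    ∀ a ∈ A0 T D C, ∃ a' ∈ A0 T D C, SemiconjBy T a a' := by
  refine fun a ha ↦ exists_semiconjBy_of_mem_adjoin ?_ ha
  rintro x ((rfl | rfl) | hx)
  · exact ⟨x, T_mem_A0, Commute.refl x⟩
  · have hTS : SemiconjBy T (-(D * T)) (-(D * T) + 1) := by
      rw [SemiconjBy, ← hweyl]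
      noncomm_ring
    exact ⟨_, add_mem S_mem_A0 (one_mem _), hTS⟩
  · exact ⟨x, Algebra.subset_adjoin (Or.inr hx), (hC x hx).symm⟩

variable (T D C) in
/-- The ideal `I_w` of `k[x]`, with underlying set `VFilt.bSet T D C w`; its monic generator is the
`b`-function of `w`. -/
def bIdeal [CharZero k] (w : M) : Ideal k[X] where
  carrier := bSet T D C w
  zero_mem' := ⟨0, zero_mem _, by simp⟩
  add_mem' := by
    rintro b c ⟨a, ha, hab⟩ ⟨a', ha', hac⟩
    exact ⟨a + a', add_mem ha ha', by simp [hab, hac]⟩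
  smul_mem' := by
    rintro c b ⟨a, ha, hab⟩
    exact ⟨aeval (-(D * T)) c * a, mul_mem (aeval_mem_A0 c) ha, by simp [hab]⟩

lemma mem_bIdeal [CharZero k] {w : M} {b : k[X]} : b ∈ bIdeal T D C w ↔
    aeval (-(D * T)) b w ∈ Submodule.span (A0 T D C) {T w} := by
  rw [Submodule.mem_span_singleton]
  constructor
  · rintro ⟨a, ha, hab⟩
    exact ⟨⟨a, ha⟩, hab.symm⟩
  · rintro ⟨⟨a, ha⟩, hab⟩
    exact ⟨a, ha, hab.symm⟩

end VFilt

namespace IsWeakVFiltration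

lemma exists_gt_le_floor (hV : IsWeakVFiltration T D C V) :
    ∃ ℓ : ℕ, 0 < ℓ ∧ ∀ α : ℚ, VFilt.gt V α ≤ V ((⌊α * ℓ⌋ + 1) / ℓ) := by
  obtain ⟨ℓ, hℓ, hconst⟩ := hV.discrete
  have hℓ' : (0 : ℚ) < ℓ := Nat.cast_pos.2 hℓ
  refine ⟨ℓ, hℓ, fun α ↦ iSup₂_le fun β hβ ↦ ?_⟩
  obtain hβ' | hβ' := le_total β ((⌊α * ℓ⌋ + 1) / ℓ)
  · have hfloor : (⌊α * ℓ⌋ : ℚ) / ℓ ≤ α := (div_le_iff₀ hℓ').2 (Int.floor_le _)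
    have hlt : (⌊α * ℓ⌋ : ℚ) / ℓ < β := hfloor.trans_lt hβ
    exact (hconst ⌊α * ℓ⌋ β _ ⟨hlt, hβ'⟩ ⟨hlt.trans_le hβ', le_rfl⟩).le
  · exact hV.antitone hβ'

lemma exists_aeval_prod_mem_gt (hV : IsWeakVFiltration T D C V) (α : ℚ) :
    ∃ L : Multiset ℚ, (∀ γ ∈ L, γ = -α ∧ V (-γ) ≠ VFilt.gt V (-γ)) ∧
      ∀ w ∈ V α, aeval (-(D * T)) (L.map fun γ : ℚ ↦ X - Polynomial.C (γ : k)).prod w ∈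
        VFilt.gt V α := by
  by_cases hjump : V α = VFilt.gt V α
  · exact ⟨0, by simp, fun w hw ↦ by simpa using hjump ▸ hw⟩
  · obtain ⟨N, -, hN⟩ := hV.nilpotent α
    refine ⟨Multiset.replicate N (-α), fun γ hγ ↦ ?_, fun w hw ↦ ?_⟩
    · obtain rfl := Multiset.eq_of_mem_replicate hγ
      exact ⟨rfl, by rwa [neg_neg]⟩
    · simpa [Algebra.algebraMap_eq_smul_one] using hN w hw

theorem exists_aeval_prod_mem (hV : IsWeakVFiltration T D C V) (α β : ℚ) :
    ∃ L : Multiset ℚ, (∀ γ ∈ L, γ ≤ -α ∧ V (-γ) ≠ VFilt.gt V (-γ)) ∧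
      ∀ w ∈ V α, aeval (-(D * T)) (L.map fun γ : ℚ ↦ X - Polynomial.C (γ : k)).prod w ∈ V β := by
  obtain ⟨ℓ, hℓ, hgt⟩ := hV.exists_gt_le_floor
  have hℓ' : (0 : ℚ) < ℓ := Nat.cast_pos.2 hℓ
  obtain ⟨n, hn⟩ := exists_nat_ge (β * ℓ - ⌊α * ℓ⌋)
  induction n generalizing α with
  | zero =>
    have hβα : β ≤ α := by
      refine le_of_mul_le_mul_right ?_ hℓ'
      rw [Nat.cast_zero] at hn
      linarith [Int.floor_le (α * ℓ)]
    exact ⟨0, by simp, fun w hw ↦ by simpa using hV.antitone hβα hw⟩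
  | succ n ih =>
    set α' : ℚ := (⌊α * ℓ⌋ + 1) / ℓ with hα'
    have hαα' : α ≤ α' := (le_div_iff₀ hℓ').2 (Int.lt_floor_add_one _).le
    have hfloor : ⌊α' * ℓ⌋ = ⌊α * ℓ⌋ + 1 := by
      rw [hα', div_mul_cancel₀ _ hℓ'.ne']
      exact_mod_cast Int.floor_intCast (⌊α * ℓ⌋ + 1)
    obtain ⟨L, hL, hLw⟩ := hV.exists_aeval_prod_mem_gt α
    obtain ⟨L', hL', hLw'⟩ := ih α' (by rw [hfloor]; push_cast at hn ⊢; linarith)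
    refine ⟨L' + L, fun γ hγ ↦ ?_, fun w hw ↦ ?_⟩
    · obtain hγ | hγ := Multiset.mem_add.1 hγ
      · exact ⟨(hL' γ hγ).1.trans (neg_le_neg hαα'), (hL' γ hγ).2⟩
      · exact ⟨(hL γ hγ).1.le, (hL γ hγ).2⟩
    · rw [Multiset.map_add, Multiset.prod_add, map_mul, Module.End.mul_apply]
      exact hLw' _ (hgt α (hLw w hw))

/-- The step `V^α` of a weak `V`-filtration, as an `A0`-submodule, so that chain
conditions over `A0` apply to it. -/
def level (hV : IsWeakVFiltration T D C V) (α : ℚ) : Submodule (VFilt.A0 T D C) M where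
  toAddSubmonoid := (V α).toAddSubmonoid
  smul_mem' a x hx := hV.stable a a.2 α ⟨x, hx, rfl⟩

end IsWeakVFiltration

namespace IsVFiltration

lemma level_fg (hV : IsVFiltration T D C V) (α : ℚ) : (hV.level α).FG := by
  obtain ⟨F, hFV, hF⟩ := hV.fg α
  refine ⟨F, le_antisymm (Submodule.span_le.2 hFV) ?_⟩
  refine hF ((Submodule.span (VFilt.A0 T D C) (F : Set M)).restrictScalars k) ?_
    Submodule.subset_span
  rintro a ha _ ⟨x, hx, rfl⟩
  exact Submodule.smul_mem _ (⟨a, ha⟩ : VFilt.A0 T D C) hx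

lemma map_pow_T_one (hV : IsVFiltration T D C V) (n : ℕ) : (V 1).map (T ^ n) = V (n + 1) := by
  induction n with
  | zero => simp [Module.End.one_eq_id]
  | succ n ih =>
    rw [pow_succ', Module.End.mul_eq_comp, Submodule.map_comp, ih, hV.mapT_eq _ (by positivity),
      Nat.cast_succ]

theorem exists_inter_subset_image_T
    (hT : ∀ a ∈ VFilt.A0 T D C, ∃ a' ∈ VFilt.A0 T D C, SemiconjBy T a a')
    (hNoeth : IsNoetherianRing (VFilt.A0 T D C)) (hV : IsVFiltration T D C V)
    (P : Submodule (VFilt.A0 T D C) M) : ∃ β : ℚ, (P ∩ V β : Set M) ⊆ T '' P := by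
  have hT_smul (r : VFilt.A0 T D C) : ∃ r' : VFilt.A0 T D C, ∀ x : M, T (r • x) = r' • T x := by
    obtain ⟨a', ha', hraT⟩ := hT r r.2
    exact ⟨⟨a', ha'⟩, LinearMap.congr_fun hraT⟩
  have hTP : ∀ x ∈ P, T x ∈ P := fun x hx ↦
    P.smul_mem (⟨T, VFilt.T_mem_A0⟩ : VFilt.A0 T D C) hx
  have : IsNoetherian (VFilt.A0 T D C) (hV.level 1) :=
    isNoetherian_of_fg_of_noetherian _ (hV.level_fg 1)
  obtain ⟨n, hn⟩ := exists_forall_iterate_mem_of_iterate_succ_mem T.toAddMonoidHom hT_smul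
    (hV.level 1) P hTP
  refine ⟨(n + 1 : ℕ) + 1, ?_⟩
  rintro x ⟨hxP, hxV⟩
  obtain ⟨u, hu, rfl⟩ := (hV.map_pow_T_one (n + 1)).ge hxV
  rw [Module.End.pow_apply] at hxP ⊢
  exact ⟨T^[n] u, hn u hu hxP, (Function.iterate_succ_apply' T n u).symm⟩

theorem exists_span_inter_subset_span_T
    (hT : ∀ a ∈ VFilt.A0 T D C, ∃ a' ∈ VFilt.A0 T D C, SemiconjBy T a a')
    (hNoeth : IsNoetherianRing (VFilt.A0 T D C)) (hV : IsVFiltration T D C V) (w : M) :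
    ∃ β : ℚ, (Submodule.span (VFilt.A0 T D C) {w} ∩ V β : Set M) ⊆
      Submodule.span (VFilt.A0 T D C) {T w} := by
  obtain ⟨β, hβ⟩ := hV.exists_inter_subset_image_T hT hNoeth (Submodule.span (VFilt.A0 T D C) {w})
  refine ⟨β, hβ.trans ?_⟩
  rintro _ ⟨y, hy, rfl⟩
  obtain ⟨⟨a, ha⟩, rfl⟩ := Submodule.mem_span_singleton.1 hy
  obtain ⟨a', ha', hTa⟩ := hT a ha
  exact Submodule.mem_span_singleton.2 ⟨⟨a', ha'⟩, (LinearMap.congr_fun hTa w).symm⟩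

theorem exists_prod_mem_bIdeal [CharZero k]
    (hT : ∀ a ∈ VFilt.A0 T D C, ∃ a' ∈ VFilt.A0 T D C, SemiconjBy T a a')
    (hNoeth : IsNoetherianRing (VFilt.A0 T D C)) (hV : IsVFiltration T D C V) {w : M} {α : ℚ}
    (hw : w ∈ V α) :
    ∃ L : Multiset ℚ, (∀ γ ∈ L, γ ≤ -α ∧ V (-γ) ≠ VFilt.gt V (-γ)) ∧
      (L.map fun γ : ℚ ↦ X - Polynomial.C (γ : k)).prod ∈ VFilt.bIdeal T D C w := by
  obtain ⟨β, hβ⟩ := hV.exists_span_inter_subset_span_T hT hNoeth w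
  obtain ⟨L, hL, hLw⟩ := hV.exists_aeval_prod_mem α β
  have hspan (b : k[X]) : aeval (-(D * T)) b w ∈ Submodule.span (VFilt.A0 T D C) {w} :=
    Submodule.mem_span_singleton.2 ⟨⟨_, VFilt.aeval_mem_A0 b⟩, rfl⟩
  exact ⟨L, hL, VFilt.mem_bIdeal.2 (hβ ⟨hspan _, hLw w hw⟩)⟩

end IsVFiltration

end VFiltrationLemmas

theorem stmt13_general {k : Type*} [Field k] [CharZero k]
    {M : Type*} [AddCommGroup M] [Module k M]
    (T D : Module.End k M) (C : Set (Module.End k M))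
    (hT : ∀ a ∈ VFilt.A0 T D C, ∃ a' ∈ VFilt.A0 T D C, SemiconjBy T a a')
    (hNoeth : IsNoetherianRing (VFilt.A0 T D C))
    (V : ℚ → Submodule k M) (hV : IsVFiltration T D C V) :
    (∀ w : M, ∃ b : Polynomial k, b ≠ 0 ∧ b ∈ VFilt.bSet T D C w) ∧
    (∀ (w : M) (α : ℚ), w ∈ V α →
      ∃ bw : Polynomial k, bw.Monic ∧ bw ∈ VFilt.bSet T D C w ∧
        (∀ c ∈ VFilt.bSet T D C w, bw ∣ c) ∧
        ∃ L : Multiset ℚ,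
          bw = (L.map fun γ : ℚ => Polynomial.X - Polynomial.C (γ : k)).prod ∧
          ∀ γ ∈ L, γ ≤ -α ∧ V (-γ) ≠ VFilt.gt V (-γ)) := by
  refine (and_iff_right_of_imp fun hbw w ↦ ?_).2 fun w α hw ↦ ?_
  · obtain ⟨α, hw⟩ := hV.exhaustive w
    obtain ⟨b, hb, hbI, -⟩ := hbw w α hw
    exact ⟨b, hb.ne_zero, hbI⟩
  obtain ⟨L, hL, hLw⟩ := hV.exists_prod_mem_bIdeal hT hNoeth hw
  obtain ⟨L', hle, hspan⟩ := exists_le_eq_span_prod_X_sub_C hLw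
  have hmem (b : Polynomial k) : b ∈ VFilt.bSet T D C w ↔
      (L'.map fun γ : ℚ ↦ Polynomial.X - Polynomial.C (γ : k)).prod ∣ b := by
    rw [← Ideal.mem_span_singleton, ← hspan]
    rfl
  exact ⟨_, Polynomial.monic_multiset_prod_of_monic _ _ fun γ _ ↦ Polynomial.monic_X_sub_C _,
    (hmem _).2 dvd_rfl, fun c ↦ (hmem c).1, L', rfl,
    fun γ hγ ↦ hL γ (Multiset.mem_of_le hle hγ)⟩

/-- **Theorem 4.6(i).** If `A0` is left Noetherian and `M` admits a `V`-filtration, then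
for every `w ∈ M` the ideal `I_w` is nonzero; moreover, if `w ∈ V^α`, the monic generator
`b_w` of `I_w` factors over `ℚ` into linear factors, and every root `γ` of `b_w` is a
rational number with `γ ≤ -α` and `V^{-γ} ≠ V^{>-γ}`. -/
theorem stmt13 {k : Type*} [Field k] [CharZero k]
    {M : Type*} [AddCommGroup M] [Module k M]
    (T D : Module.End k M) (C : Set (Module.End k M))
    (hweyl : D * T - T * D = 1)
    (hC : ∀ c ∈ C, Commute c T ∧ Commute c D)
    (hNoeth : IsNoetherianRing ↥(VFilt.A0 T D C))
    (V : ℚ → Submodule k M) (hV : IsVFiltration T D C V) :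
    (∀ w : M, ∃ b : Polynomial k, b ≠ 0 ∧ b ∈ VFilt.bSet T D C w) ∧
    (∀ (w : M) (α : ℚ), w ∈ V α →
      ∃ bw : Polynomial k, bw.Monic ∧ bw ∈ VFilt.bSet T D C w ∧
        (∀ c ∈ VFilt.bSet T D C w, bw ∣ c) ∧
        ∃ L : Multiset ℚ,
          bw = (L.map fun γ : ℚ => Polynomial.X - Polynomial.C (γ : k)).prod ∧
          ∀ γ ∈ L, γ ≤ -α ∧ V (-γ) ≠ VFilt.gt V (-γ)) :=
  stmt13_general T D C
    (VFilt.exists_semiconjBy_of_mem_A0 hweyl fun c hc ↦ (hC c hc).1) hNoeth V hV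
end
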